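/- Let Γ ⊂ ℂ be a quasismooth Jordan curve, let ν ∈ A∞(Γ), and let 1 ≤ p < ∞. Then there exist constants c₁, c₂ > 0 depending only on Γ, λ_ν and p such that for every n ∈ ℕ, every polynomial p_n ∈ ℙ_n, every Borel set E ⊂ Γ and every s with 0 < |E| ≤ s < (diam Γ)/12, one has ∫_Γ |p_n|^p dν ≤ c₁ exp(c₂ δ(s) n) ∫_{Γ∖E} |p_n|^p dν. -/

import Mathlib

open MeasureTheory Metric Set Filter Bornology Complex
open scoped ENNReal NNReal Topology

noncomputable section

/-- `Γ` is a Jordan curve: the image of an injective continuous map of the unit circle. -/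
def IsJordanCurve (Γ : Set ℂ) : Prop :=
  ∃ γ : ℂ → ℂ, ContinuousOn γ (Metric.sphere (0:ℂ) 1) ∧
    Set.InjOn γ (Metric.sphere (0:ℂ) 1) ∧ Γ = γ '' (Metric.sphere (0:ℂ) 1)

/-- A (closed) subarc of `Γ`: a closed connected subset. -/
def IsSubarc (Γ J : Set ℂ) : Prop :=
  J ⊆ Γ ∧ IsClosed J ∧ IsPreconnected J

/-- `|Γ(z₁,z₂)|`: the length (1-dimensional Hausdorff measure) of the shorter subarc of `Γ`
joining `z₁` and `z₂`, described as the infimum of lengths of closed connected subsets of `Γ`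
containing both points. -/
def shorterArcLength (Γ : Set ℂ) (z₁ z₂ : ℂ) : ℝ≥0∞ :=
  ⨅ (J : Set ℂ) (_ : IsSubarc Γ J ∧ z₁ ∈ J ∧ z₂ ∈ J), μH[1] J

/-- `J` is (a realization of) the shorter arc `Γ(z₁,z₂)` of `Γ` between `z₁` and `z₂`. -/
def IsShorterArc (Γ : Set ℂ) (z₁ z₂ : ℂ) (J : Set ℂ) : Prop :=
  IsSubarc Γ J ∧ z₁ ∈ J ∧ z₂ ∈ J ∧ μH[1] J = shorterArcLength Γ z₁ z₂

/-- `Γ` is quasismooth (in the sense of Lavrentiev) with constant `Λ ≥ 1`: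
`|Γ(z₁,z₂)| ≤ Λ |z₁ - z₂|`. -/
def IsQuasismooth (Γ : Set ℂ) (Λ : ℝ) : Prop :=
  1 ≤ Λ ∧ ∀ z₁ ∈ Γ, ∀ z₂ ∈ Γ,
    shorterArcLength Γ z₁ z₂ ≤ ENNReal.ofReal (Λ * dist z₁ z₂)

/-- The union of the unbounded connected components of `Γᶜ`; for a Jordan curve `Γ` this is
the (unique) unbounded component `Ω` of the complement of `Γ`. -/
def unboundedComponent (Γ : Set ℂ) : Set ℂ :=
  {z | z ∉ Γ ∧ ¬ Bornology.IsBounded (connectedComponentIn Γᶜ z)}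

/-- `d(A,B) := inf {|z-ζ| : z ∈ A, ζ ∈ B}`. -/
def setDist (A B : Set ℂ) : ℝ := sInf (Set.image2 dist A B)

/-- The exterior `𝔻*` of the closed unit disk (finite part). -/
def extDisk : Set ℂ := {w : ℂ | 1 < ‖w‖}

/-- `Φ` is the conformal (holomorphic bijective) map of `Ω` onto `𝔻* = {|w| > 1}` normalized
by `Φ(∞) = ∞` and `Φ'(∞) := lim_{z→∞} Φ(z)/z > 0`. -/
def IsExtConformal (Ω : Set ℂ) (Φ : ℂ → ℂ) : Prop :=
  DifferentiableOn ℂ Φ Ω ∧ Set.BijOn Φ Ω extDisk ∧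
    ∃ c : ℝ, 0 < c ∧
      Filter.Tendsto (fun z => Φ z / z) (Bornology.cobounded ℂ) (nhds (c : ℂ))

/-- `Φ` additionally extends to a homeomorphism of `closure Ω` onto `{|w| ≥ 1}`. -/
def IsExtConformalClosure (Ω : Set ℂ) (Φ : ℂ → ℂ) : Prop :=
  IsExtConformal Ω Φ ∧ ContinuousOn Φ (closure Ω) ∧
    Set.BijOn Φ (closure Ω) {w : ℂ | 1 ≤ ‖w‖}

/-- The level curve `Γ_δ := {ζ ∈ Ω : |Φ(ζ)| = 1 + δ}`. -/
def levelCurve (Ω : Set ℂ) (Φ : ℂ → ℂ) (δ : ℝ) : Set ℂ :=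
  {ζ ∈ Ω | ‖Φ ζ‖ = 1 + δ}

/-- `ρ_δ(z) := d({z}, Γ_δ)`. -/
def rho (Ω : Set ℂ) (Φ : ℂ → ℂ) (δ : ℝ) (z : ℂ) : ℝ :=
  Metric.infDist z (levelCurve Ω Φ δ)

/-- `ν ∈ A∞(Γ)` with constant `lam ≥ 1`: `ν(J) ≤ lam · ν(S)` for every subarc `J ⊂ Γ` and
every Borel set `S ⊂ J` with `|J| ≤ 2|S|`. -/
def IsAInftyMeasure (Γ : Set ℂ) (ν : MeasureTheory.Measure ℂ) (lam : ℝ) : Prop :=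
  1 ≤ lam ∧ ∀ J S : Set ℂ, IsSubarc Γ J → S ⊆ J → MeasurableSet S →
    μH[1] J ≤ 2 * μH[1] S → ν J ≤ ENNReal.ofReal lam * ν S

/-!
Parametrize `Γ` by arc length and cut it into arcs `J` of length `ℓ` comparable to `s`. On `Γ`,
the modulus of the polynomial `P` is dominated by its values at growth points: a growth point `ζ`
satisfies `|P(ξ)| ≤ |P(ζ)| (1 + |ξ - ζ| / ℓ) ^ A` for all `ξ ∈ Γ`.

Let `ζ ∈ J` be a growth point. The growth condition compares `|P|` on `Γ` with the exponential of
`A` times the logarithmic potential of length measure on `J`, and Harnack's inequality gives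
`log |Φ| ≲ δ(s)` within distance `O(s)` of `Γ`; so the maximum principle, applied as in the
Bernstein–Walsh inequality, yields `|P| ≤ exp (O(1 + δ(s) n)) |P(ζ)|` on a disc of radius `4ℓ`
around `ζ`. If `|P|` were much smaller than `|P(ζ)|` on a quarter of `J`, the potential of that
set, whose density is controlled by quasismoothness, would contradict this upper bound at `ζ`. As
`E` covers at most another quarter of `J`, the `A∞` condition gives
`|P(ζ)| ^ p ν(J) ≲ ∫_{J ∖ E} |P| ^ p dν`.

Finally `A∞` measures are doubling, whence `∫_Γ (1 + |z - ζ| / ℓ) ^ (-Ap) dν(z) ≲ ν(J)` for large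
`A`, and summing the local estimates over the arcs proves the theorem.
-/

/-! ### The maximum principle for moduli of analytic functions -/

/-- `h` agrees near `z` with the modulus of an analytic function. Unlike analytic functions, such
moduli may be glued from local data and multiplied by `exp` of a harmonic function that has no
global conjugate. -/
def IsAnalyticModulusAt (h : ℂ → ℝ) (z : ℂ) : Prop :=
  ∃ F : ℂ → ℂ, AnalyticAt ℂ F z ∧ h =ᶠ[𝓝 z] fun y => ‖F y‖

theorem isAnalyticModulusAt_norm {F : ℂ → ℂ} {z : ℂ} (hF : AnalyticAt ℂ F z) :
    IsAnalyticModulusAt (fun y => ‖F y‖) z :=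
  ⟨F, hF, .rfl⟩

namespace IsAnalyticModulusAt

variable {h k : ℂ → ℝ} {z : ℂ}

theorem congr (hh : IsAnalyticModulusAt h z) (hk : k =ᶠ[𝓝 z] h) : IsAnalyticModulusAt k z :=
  let ⟨F, hF, hhF⟩ := hh
  ⟨F, hF, hk.trans hhF⟩

theorem continuousAt (hh : IsAnalyticModulusAt h z) : ContinuousAt h z :=
  let ⟨_, hF, hhF⟩ := hh
  hF.continuousAt.norm.congr hhF.symm

theorem mul (hh : IsAnalyticModulusAt h z) (hk : IsAnalyticModulusAt k z) :
    IsAnalyticModulusAt (fun y => h y * k y) z := by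
  obtain ⟨F, hF, hhF⟩ := hh
  obtain ⟨G, hG, hkG⟩ := hk
  exact ⟨_, hF.fun_mul hG, by filter_upwards [hhF, hkG] with y hy hy'; rw [hy, hy', norm_mul]⟩

theorem div_pow (hh : IsAnalyticModulusAt h z) (hk : IsAnalyticModulusAt k z) (hkz : k z ≠ 0)
    (n : ℕ) : IsAnalyticModulusAt (fun y => h y / k y ^ n) z := by
  obtain ⟨F, hF, hhF⟩ := hh
  obtain ⟨G, hG, hkG⟩ := hk
  have hGz : G z ≠ 0 := fun h0 => hkz (hkG.self_of_nhds.trans (by simp only [h0, norm_zero]))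
  refine ⟨_, hF.fun_div (hG.fun_pow n) (pow_ne_zero n hGz), ?_⟩
  filter_upwards [hhF, hkG] with y hy hy'
  rw [hy, hy', norm_div, norm_pow]

theorem eventually_eq_of_isLocalMax (hh : IsAnalyticModulusAt h z) (hmax : IsLocalMax h z) :
    ∀ᶠ y in 𝓝 z, h y = h z := by
  obtain ⟨F, hF, hhF⟩ := hh
  have hlocal : IsLocalMax (norm ∘ F) z := hmax.congr hhF
  filter_upwards [hhF, norm_eventually_eq_of_isLocalMax
    (hF.eventually_analyticAt.mono fun y hy => hy.differentiableAt) hlocal] with y hy hFy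
  rw [hy, hFy, hhF.self_of_nhds]

end IsAnalyticModulusAt

theorem isCompact_sep_le_of_eventually_lt {X : Type*} [PseudoMetricSpace X] [ProperSpace X]
    {U : Set X} (hU : IsOpen U) {h : X → ℝ} (hh : ContinuousOn h U) {c : ℝ}
    (hfrontier : ∀ x ∈ frontier U, ∀ᶠ y in 𝓝[U] x, h y < c)
    (hinfty : ∀ᶠ y in cobounded X ⊓ 𝓟 U, h y < c) :
    IsCompact {y ∈ U | c ≤ h y} := by
  refine isCompact_of_isClosed_isBounded (isClosed_of_closure_subset fun x hx => ?_) ?_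
  · have hfreq : ∃ᶠ y in 𝓝[U] x, c ≤ h y := by
      rw [frequently_nhdsWithin_iff]
      exact (mem_closure_iff_frequently.1 hx).mono fun y hy => hy.symm
    have hxU : x ∈ U := by
      by_contra hxU
      have hxf : x ∈ frontier U :=
        hU.frontier_eq ▸ ⟨closure_mono (sep_subset _ _) hx, hxU⟩
      exact hfreq ((hfrontier x hxf).mono fun y hy => not_le.2 hy)
    refine ⟨hxU, le_of_not_gt fun hlt => hfreq ?_⟩
    exact ((hh x hxU).eventually (gt_mem_nhds hlt)).mono fun y hy => not_le.2 hy
  · rw [isBounded_def]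
    filter_upwards [eventually_inf_principal.1 hinfty] with y hy hyK
    exact (hy hyK.1).not_ge hyK.2

theorem le_of_isAnalyticModulusAt {U : Set ℂ} (hU : IsOpen U) {h : ℂ → ℝ} {M : ℝ}
    (hh : ∀ z ∈ U, IsAnalyticModulusAt h z)
    (hfrontier : ∀ ζ ∈ frontier U, ∀ M' > M, ∀ᶠ z in 𝓝[U] ζ, h z < M')
    (hinfty : ∀ M' > M, ∀ᶠ z in cobounded ℂ ⊓ 𝓟 U, h z < M') {z : ℂ} (hz : z ∈ U) :
    h z ≤ M := by
  by_contra! hlt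
  have hcont : ContinuousOn h U := fun y hy => (hh y hy).continuousAt.continuousWithinAt
  have hcompact {c : ℝ} (hc : M < c) : IsCompact {y ∈ U | c ≤ h y} :=
    isCompact_sep_le_of_eventually_lt hU hcont (fun ζ hζ => hfrontier ζ hζ c hc) (hinfty c hc)
  obtain ⟨x, ⟨hxU, hzx⟩, hx⟩ :=
    (hcompact hlt).exists_isMaxOn ⟨z, hz, le_rfl⟩ (hcont.mono (sep_subset _ _))
  have hmax : ∀ y ∈ U, h y ≤ h x := fun y hy =>
    (le_total (h z) (h y)).elim (fun hzy => hx ⟨hy, hzy⟩) fun hyz => hyz.trans hzx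
  -- The set of maximum points is compact, and open since `h` is constant near a local maximum.
  have hK := hcompact (hlt.trans_le hzx)
  have hKopen : IsOpen {y ∈ U | h x ≤ h y} := by
    refine isOpen_iff_mem_nhds.2 fun y ⟨hyU, hxy⟩ => ?_
    have hylocal : IsLocalMax h y := by
      filter_upwards [hU.mem_nhds hyU] with w hw using (hmax w hw).trans hxy
    filter_upwards [hU.mem_nhds hyU, (hh y hyU).eventually_eq_of_isLocalMax hylocal]
      with w hwU hw using ⟨hwU, hw ▸ hxy⟩
  have huniv := IsClopen.eq_univ ⟨hK.isClosed, hKopen⟩ ⟨x, hxU, le_rfl⟩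
  exact noncompact_univ ℂ (huniv ▸ hK)

/-! ### Logarithmic potentials -/

/-- `μ` has linear growth with constant `C`: every ball has measure at most `C` times its radius.
Arc length on a quasismooth curve is the example to keep in mind. -/
def HasLinearGrowth {X : Type*} [PseudoMetricSpace X] [MeasurableSpace X] (μ : Measure X)
    (C : ℝ≥0) : Prop :=
  ∀ x : X, ∀ r > 0, μ (ball x r) ≤ C * ENNReal.ofReal r

/-- The logarithmic potential `x ↦ ∫ log (d(x, y) / r) dμ(y)` of `μ`, normalized so that points at
distance `r` contribute nothing. -/
def logPot {X : Type*} [PseudoMetricSpace X] [MeasurableSpace X] (μ : Measure X) (r : ℝ) (x : X) :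
    ℝ :=
  ∫ y, Real.log (dist x y / r) ∂μ

/-- The weight `exp (-(a / r) * logPot μ r)`. When `μ` has total mass `r` and is carried by a set of
diameter `r`, it decays like the power `-a` of the distance to that set, and in the plane it is
locally the modulus of an analytic function off that set. -/
def potWeight {X : Type*} [PseudoMetricSpace X] [MeasurableSpace X] (μ : Measure X) (r a : ℝ)
    (x : X) : ℝ :=
  Real.exp (-(a / r * logPot μ r x))

section LogPot

variable {X : Type*} [PseudoMetricSpace X] {C : ℝ≥0} {S : Set X} {r b : ℝ}

theorem ofReal_posLog_div_dist_le_tsum (hr : 0 < r) (x y : X) :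
    ENNReal.ofReal (Real.posLog (r / dist x y)) ≤
      ∑' i : ℕ, (ball x (r / 2 ^ i)).indicator 1 y := by
  have hmem : ∀ i < ⌈Real.posLog (r / dist x y)⌉₊, y ∈ ball x (r / 2 ^ i) := by
    intro i hi
    have hlog : (i : ℝ) < Real.log (r / dist x y) :=
      (lt_max_iff.1 (Nat.lt_ceil.1 hi)).resolve_left i.cast_nonneg.not_gt
    have hdist : 0 < dist x y := dist_nonneg.lt_of_ne fun h0 => by
      rw [← h0, div_zero, Real.log_zero] at hlog
      exact i.cast_nonneg.not_gt hlog
    have hpow : (2 : ℝ) ^ i < r / dist x y := by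
      calc (2 : ℝ) ^ i ≤ Real.exp 1 ^ i := by
            gcongr
            linarith [Real.add_one_le_exp (1 : ℝ)]
        _ = Real.exp i := by rw [← Real.exp_nat_mul, mul_one]
        _ < r / dist x y := (Real.lt_log_iff_exp_lt (by positivity)).1 hlog
    rw [mem_ball', lt_div_iff₀ (by positivity)]
    rwa [lt_div_iff₀ hdist, mul_comm] at hpow
  calc ENNReal.ofReal (Real.posLog (r / dist x y))
      ≤ ENNReal.ofReal (⌈Real.posLog (r / dist x y)⌉₊ : ℝ) :=
        ENNReal.ofReal_le_ofReal (Nat.le_ceil _)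
    _ = ∑ i ∈ Finset.range ⌈Real.posLog (r / dist x y)⌉₊,
          (ball x (r / 2 ^ i)).indicator 1 y := by
        rw [Finset.sum_congr rfl fun i hi =>
          indicator_of_mem (hmem i (Finset.mem_range.1 hi)) (1 : X → ℝ≥0∞)]
        simp
    _ ≤ ∑' i : ℕ, (ball x (r / 2 ^ i)).indicator 1 y := ENNReal.sum_le_tsum _

variable [MeasurableSpace X] [OpensMeasurableSpace X] {μ : Measure X}

theorem lintegral_posLog_div_dist_le (hμ : HasLinearGrowth μ C) (x : X) (hr : 0 < r) :
    ∫⁻ y, ENNReal.ofReal (Real.posLog (r / dist x y)) ∂μ ≤ ENNReal.ofReal (2 * C * r) :=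
  calc ∫⁻ y, ENNReal.ofReal (Real.posLog (r / dist x y)) ∂μ
      ≤ ∫⁻ y, ∑' i : ℕ, (ball x (r / 2 ^ i)).indicator 1 y ∂μ :=
        lintegral_mono (ofReal_posLog_div_dist_le_tsum hr x)
    _ = ∑' i : ℕ, μ (ball x (r / 2 ^ i)) := by
        rw [lintegral_tsum fun i => (measurable_one.indicator measurableSet_ball).aemeasurable]
        simp only [lintegral_indicator_one measurableSet_ball]
    _ ≤ ∑' i : ℕ, C * ENNReal.ofReal r * 2⁻¹ ^ i := by
        refine ENNReal.tsum_le_tsum fun i => (hμ x _ (by positivity)).trans_eq ?_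
        rw [ENNReal.ofReal_div_of_pos (by positivity), ENNReal.ofReal_pow zero_le_two,
          ENNReal.ofReal_ofNat, div_eq_mul_inv, ENNReal.inv_pow, mul_assoc]
    _ = ENNReal.ofReal (2 * C * r) := by
        rw [ENNReal.tsum_mul_left, ENNReal.tsum_geometric, ENNReal.one_sub_inv_two, inv_inv,
          mul_comm, ENNReal.ofReal_mul (by positivity), ENNReal.ofReal_mul zero_le_two,
          ENNReal.ofReal_ofNat, ENNReal.ofReal_coe_nnreal, mul_assoc]

theorem measurable_posLog_div_dist (x : X) :
    Measurable fun y => Real.posLog (r / dist x y) := by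
  fun_prop

theorem integrable_posLog_div_dist (hμ : HasLinearGrowth μ C) (x : X) (hr : 0 < r) :
    Integrable (fun y => Real.posLog (r / dist x y)) μ :=
  (lintegral_ofReal_ne_top_iff_integrable (measurable_posLog_div_dist x).aestronglyMeasurable
    (.of_forall fun _ => Real.posLog_nonneg)).1
    (ne_top_of_le_ne_top ENNReal.ofReal_ne_top (lintegral_posLog_div_dist_le hμ x hr))

theorem integral_posLog_div_dist_le (hμ : HasLinearGrowth μ C) (x : X) (hr : 0 < r) :
    ∫ y, Real.posLog (r / dist x y) ∂μ ≤ 2 * C * r := by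
  rw [integral_eq_lintegral_of_nonneg_ae (.of_forall fun _ => Real.posLog_nonneg)
    (measurable_posLog_div_dist x).aestronglyMeasurable]
  exact ENNReal.toReal_le_of_le_ofReal (by positivity) (lintegral_posLog_div_dist_le hμ x hr)

variable [IsFiniteMeasure μ]

theorem integrable_posLog_dist_div (hS : IsBounded S) (hSμ : ∀ᵐ y ∂μ, y ∈ S) (x : X)
    (hr : 0 < r) : Integrable (fun y => Real.posLog (dist x y / r)) μ := by
  obtain ⟨R, hR⟩ := hS.subset_closedBall x
  refine Integrable.of_bound (Measurable.aestronglyMeasurable (by fun_prop))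
    (Real.posLog (R / r)) (hSμ.mono fun y hy => ?_)
  have hyR : dist x y ≤ R := mem_closedBall'.1 (hR hy)
  rw [Real.norm_of_nonneg Real.posLog_nonneg]
  exact Real.posLog_le_posLog (by positivity) (by gcongr)

theorem integrable_log_dist_div (hμ : HasLinearGrowth μ C) (hS : IsBounded S)
    (hSμ : ∀ᵐ y ∂μ, y ∈ S) (x : X) (hr : 0 < r) :
    Integrable (fun y => Real.log (dist x y / r)) μ := by
  refine ((integrable_posLog_dist_div hS hSμ x hr).sub
    (integrable_posLog_div_dist hμ x hr)).congr (.of_forall fun y => ?_)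
  simp only [Pi.sub_apply, ← Real.posLog_sub_posLog_inv (x := dist x y / r), inv_div]

theorem logPot_eq_sub (hμ : HasLinearGrowth μ C) (hS : IsBounded S) (hSμ : ∀ᵐ y ∂μ, y ∈ S)
    (x : X) (hr : 0 < r) :
    logPot μ r x =
      ∫ y, Real.posLog (dist x y / r) ∂μ - ∫ y, Real.posLog (r / dist x y) ∂μ := by
  rw [← integral_sub (integrable_posLog_dist_div hS hSμ x hr)
    (integrable_posLog_div_dist hμ x hr)]
  simp only [logPot, ← Real.posLog_sub_posLog_inv (x := dist x _ / r), inv_div]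

theorem le_logPot (hμ : HasLinearGrowth μ C) (hS : IsBounded S) (hSμ : ∀ᵐ y ∂μ, y ∈ S)
    (x : X) (hr : 0 < r) (hb : ∀ y ∈ S, b ≤ Real.posLog (dist x y / r)) :
    b * μ.real univ - 2 * C * r ≤ logPot μ r x := by
  have hmono : ∫ _, b ∂μ ≤ ∫ y, Real.posLog (dist x y / r) ∂μ :=
    integral_mono_ae (integrable_const b) (integrable_posLog_dist_div hS hSμ x hr) (hSμ.mono hb)
  rw [integral_const, smul_eq_mul, mul_comm] at hmono
  linarith [logPot_eq_sub hμ hS hSμ x hr, integral_posLog_div_dist_le hμ x hr]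

theorem mul_measureReal_le_logPot (hμ : HasLinearGrowth μ C) (hS : IsBounded S)
    (hSμ : ∀ᵐ y ∂μ, y ∈ S) (x : X) (hr : 0 < r) (hb : ∀ y ∈ S, b ≤ Real.log (dist x y / r)) :
    b * μ.real univ ≤ logPot μ r x := by
  have hmono : ∫ _, b ∂μ ≤ logPot μ r x :=
    integral_mono_ae (integrable_const b) (integrable_log_dist_div hμ hS hSμ x hr) (hSμ.mono hb)
  rwa [integral_const, smul_eq_mul, mul_comm] at hmono

theorem logPot_le_mul_measureReal (hμ : HasLinearGrowth μ C) (hS : IsBounded S)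
    (hSμ : ∀ᵐ y ∂μ, y ∈ S) (x : X) (hr : 0 < r) (hb : ∀ y ∈ S, Real.log (dist x y / r) ≤ b) :
    logPot μ r x ≤ b * μ.real univ := by
  have hmono : logPot μ r x ≤ ∫ _, b ∂μ :=
    integral_mono_ae (integrable_log_dist_div hμ hS hSμ x hr) (integrable_const b) (hSμ.mono hb)
  rwa [integral_const, smul_eq_mul, mul_comm] at hmono

section PotWeight

variable {a : ℝ} {x₀ : X}

theorem rpow_neg_le_potWeight (hμ : HasLinearGrowth μ C) (hS : IsBounded S)
    (hSμ : ∀ᵐ y ∂μ, y ∈ S) (hr : 0 < r) (hμr : μ.real univ = r) (hx₀ : ∀ y ∈ S, dist y x₀ ≤ r)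
    (ha : 0 ≤ a) (x : X) : (1 + dist x x₀ / r) ^ (-a) ≤ potWeight μ r a x := by
  have hD : 1 ≤ 1 + dist x x₀ / r := le_add_of_nonneg_right (by positivity)
  have hlog : ∀ y ∈ S, Real.log (dist x y / r) ≤ Real.log (1 + dist x x₀ / r) := by
    intro y hy
    rcases (dist_nonneg (x := x) (y := y)).eq_or_lt with h0 | h0
    · rw [← h0, zero_div, Real.log_zero]
      exact Real.log_nonneg hD
    · refine Real.log_le_log (by positivity) ?_
      rw [div_le_iff₀ hr, add_mul, div_mul_cancel₀ _ hr.ne', one_mul]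
      linarith [dist_triangle_right x y x₀, hx₀ y hy]
  have hpot := logPot_le_mul_measureReal hμ hS hSμ x hr hlog
  rw [Real.rpow_def_of_pos (by positivity), potWeight, Real.exp_le_exp, mul_neg, neg_le_neg_iff]
  calc a / r * logPot μ r x ≤ a / r * (Real.log (1 + dist x x₀ / r) * r) := by
        rw [← hμr] at hpot ⊢; gcongr
    _ = Real.log (1 + dist x x₀ / r) * a := by field_simp

theorem potWeight_le_mul_rpow_neg (hμ : HasLinearGrowth μ C) (hS : IsBounded S)
    (hSμ : ∀ᵐ y ∂μ, y ∈ S) (hr : 0 < r) (hμr : μ.real univ = r) (hx₀ : ∀ y ∈ S, dist y x₀ ≤ r)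
    (ha : 0 ≤ a) (x : X) :
    potWeight μ r a x ≤ Real.exp (a * (Real.log 3 + 2 * C)) * (1 + dist x x₀ / r) ^ (-a) := by
  have hlog : ∀ y ∈ S,
      Real.log (1 + dist x x₀ / r) - Real.log 3 ≤ Real.posLog (dist x y / r) := by
    intro y hy
    have hdist : dist x x₀ / r ≤ dist x y / r + 1 := by
      rw [div_add_one hr.ne']
      gcongr
      linarith [dist_triangle x y x₀, hx₀ y hy]
    rw [Real.posLog_eq_log_max_one (by positivity), sub_le_iff_le_add',
      ← Real.log_mul three_ne_zero (by positivity)]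
    exact Real.log_le_log (by positivity)
      (by linarith [le_max_left 1 (dist x y / r), le_max_right 1 (dist x y / r)])
  have hpot := le_logPot hμ hS hSμ x hr hlog
  rw [hμr] at hpot
  rw [Real.rpow_def_of_pos (by positivity), potWeight, ← Real.exp_add, Real.exp_le_exp]
  have hscaled : a / r * ((Real.log (1 + dist x x₀ / r) - Real.log 3) * r - 2 * C * r) ≤
      a / r * logPot μ r x := by gcongr
  have hcancel : a / r * ((Real.log (1 + dist x x₀ / r) - Real.log 3) * r - 2 * C * r) =
      a * (Real.log (1 + dist x x₀ / r) - Real.log 3 - 2 * C) := by field_simp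
  linarith

theorem potWeight_le_exp (hμ : HasLinearGrowth μ C) (hS : IsBounded S)
    (hSμ : ∀ᵐ y ∂μ, y ∈ S) (hr : 0 < r) (ha : 0 ≤ a) (x : X) :
    potWeight μ r a x ≤ Real.exp (2 * C * a) := by
  have hpot := le_logPot hμ hS hSμ x hr (b := 0) fun _ _ => Real.posLog_nonneg
  have hscaled : a / r * (0 * μ.real univ - 2 * C * r) ≤ a / r * logPot μ r x := by gcongr
  have hcancel : a / r * (0 * μ.real univ - 2 * C * r) = -(2 * C * a) := by field_simp; ring
  exact Real.exp_le_exp.2 (by linarith)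

theorem one_le_potWeight (hμ : HasLinearGrowth μ C) (hS : IsBounded S)
    (hSμ : ∀ᵐ y ∂μ, y ∈ S) (hr : 0 < r) (ha : 0 ≤ a) {x : X} (hx : ∀ y ∈ S, dist y x ≤ r) :
    1 ≤ potWeight μ r a x := by
  have hpot := logPot_le_mul_measureReal hμ hS hSμ x hr (b := 0) fun y hy =>
    Real.log_nonpos (by positivity) (div_le_one_of_le₀ (dist_comm y x ▸ hx y hy) hr.le)
  rw [zero_mul] at hpot
  exact Real.one_le_exp (neg_nonneg.2 (mul_nonpos_of_nonneg_of_nonpos (by positivity) hpot))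

theorem potWeight_le_exp_of_two_mul_le_dist (hμ : HasLinearGrowth μ C) (hS : IsBounded S)
    (hSμ : ∀ᵐ y ∂μ, y ∈ S) (hr : 0 < r) (ha : 0 ≤ a) (x : X) (hx : ∀ y ∈ S, 2 * r ≤ dist x y) :
    potWeight μ r a x ≤ Real.exp (-(a * Real.log 2 * μ.real univ / r)) := by
  have hpot := mul_measureReal_le_logPot hμ hS hSμ x hr (b := Real.log 2) fun y hy =>
    Real.log_le_log two_pos ((le_div_iff₀ hr).2 (hx y hy))
  refine Real.exp_le_exp.2 (neg_le_neg ?_)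
  calc a * Real.log 2 * μ.real univ / r = a / r * (Real.log 2 * μ.real univ) := by ring
    _ ≤ a / r * logPot μ r x := by gcongr

end PotWeight

end LogPot

theorem sub_div_sub_mem_slitPlane {w y z : ℂ} (h : dist y z < dist z w) :
    (y - w) / (z - w) ∈ slitPlane := by
  have hzw : z - w ≠ 0 := sub_ne_zero.2 (dist_pos.1 (dist_nonneg.trans_lt h))
  have hquot : (y - w) / (z - w) = 1 + (y - z) / (z - w) := by field_simp; ring
  rw [hquot]
  refine mem_slitPlane_of_norm_lt_one ?_
  rwa [norm_div, div_lt_one (norm_pos_iff.2 hzw), ← dist_eq_norm, ← dist_eq_norm]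

section LogPotHolomorphic

variable {μ : Measure ℂ} [IsFiniteMeasure μ] {C : ℝ≥0} {S : Set ℂ} {y z : ℂ} {r ε : ℝ}

theorem integrable_clog_sub_div_sub (hS : IsCompact S) (hSμ : ∀ᵐ w ∂μ, w ∈ S)
    (hε : ∀ w ∈ S, ε ≤ dist z w) (hy : y ∈ ball z ε) :
    Integrable (fun w => Complex.log ((y - w) / (z - w))) μ := by
  have hlt : ∀ w ∈ S, dist y z < dist z w := fun w hw => (mem_ball.1 hy).trans_le (hε w hw)
  have hcont : ContinuousOn (fun w => Complex.log ((y - w) / (z - w))) S := by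
    refine ContinuousOn.clog (ContinuousOn.div (by fun_prop) (by fun_prop) fun w hw => ?_)
      fun w hw => sub_div_sub_mem_slitPlane (hlt w hw)
    exact sub_ne_zero.2 (dist_pos.1 (dist_nonneg.trans_lt (hlt w hw)))
  have hint := hcont.integrableOn_compact (μ := μ) hS
  rwa [IntegrableOn, Measure.restrict_eq_self_of_ae_mem hSμ] at hint

theorem differentiableOn_integral_clog_sub_div_sub (hS : IsCompact S) (hSμ : ∀ᵐ w ∂μ, w ∈ S)
    (hε : ∀ w ∈ S, ε ≤ dist z w) :
    DifferentiableOn ℂ (fun y => ∫ w, Complex.log ((y - w) / (z - w)) ∂μ) (ball z (ε / 2)) := by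
  intro y hy
  have hε0 : 0 < ε := by linarith [dist_nonneg.trans_lt (mem_ball.1 hy)]
  have hsub : ball z (ε / 2) ⊆ ball z ε := ball_subset_ball (half_le_self hε0.le)
  have hnhds : ball z (ε / 2) ∈ 𝓝 y := isOpen_ball.mem_nhds hy
  have hlower : ∀ w ∈ S, ∀ x ∈ ball z (ε / 2), ε / 2 ≤ ‖x - w‖ := fun w hw x hx => by
    rw [← dist_eq_norm]
    linarith [hε w hw, mem_ball'.1 hx, dist_triangle z x w]
  refine (hasDerivAt_integral_of_dominated_loc_of_deriv_le (μ := μ) (𝕜 := ℂ)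
    (F' := fun x w => 1 / (x - w)) (bound := fun _ => 1 / (ε / 2)) hnhds
    (by filter_upwards [hnhds] with x hx using
      (integrable_clog_sub_div_sub hS hSμ hε (hsub hx)).aestronglyMeasurable)
    (integrable_clog_sub_div_sub hS hSμ hε (hsub hy))
    (Measurable.aestronglyMeasurable (by fun_prop)) ?_ (integrable_const _)
    ?_).2.differentiableAt.differentiableWithinAt
  · filter_upwards [hSμ] with w hw x hx
    rw [norm_div, norm_one]
    exact one_div_le_one_div_of_le (half_pos hε0) (hlower w hw x hx)
  · filter_upwards [hSμ] with w hw x hx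
    have hzw : z - w ≠ 0 := sub_ne_zero.2 (dist_pos.1 (hε0.trans_le (hε w hw)))
    have hderiv : HasDerivAt (fun x => (x - w) / (z - w)) (1 / (z - w)) x :=
      ((hasDerivAt_id x).sub_const w).div_const _
    have hlog := hderiv.clog
      (sub_div_sub_mem_slitPlane ((mem_ball.1 (hsub hx)).trans_le (hε w hw)))
    rwa [div_div_div_cancel_right₀ hzw] at hlog

theorem re_integral_clog_sub_div_sub (hμ : HasLinearGrowth μ C) (hS : IsCompact S)
    (hSμ : ∀ᵐ w ∂μ, w ∈ S) (hε : ∀ w ∈ S, ε ≤ dist z w) (hr : 0 < r) (hy : y ∈ ball z ε) :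
    (∫ w, Complex.log ((y - w) / (z - w)) ∂μ).re = logPot μ r y - logPot μ r z := by
  calc (∫ w, Complex.log ((y - w) / (z - w)) ∂μ).re
      = ∫ w, (Complex.log ((y - w) / (z - w))).re ∂μ :=
        (integral_re (integrable_clog_sub_div_sub hS hSμ hε hy)).symm
    _ = ∫ w, (Real.log (dist y w / r) - Real.log (dist z w / r)) ∂μ := by
        refine integral_congr_ae (hSμ.mono fun w hw => ?_)
        have hlt : dist y z < dist z w := (mem_ball.1 hy).trans_le (hε w hw)
        have hzw : 0 < dist z w := dist_nonneg.trans_lt hlt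
        have hyw : 0 < dist y w := by linarith [dist_triangle_left z w y]
        simp only [Complex.log_re, norm_div, ← dist_eq_norm]
        rw [Real.log_div hyw.ne' hzw.ne', Real.log_div hyw.ne' hr.ne', Real.log_div hzw.ne' hr.ne']
        ring
    _ = logPot μ r y - logPot μ r z :=
        integral_sub (integrable_log_dist_div hμ hS.isBounded hSμ y hr)
          (integrable_log_dist_div hμ hS.isBounded hSμ z hr)

theorem isAnalyticModulusAt_potWeight (hμ : HasLinearGrowth μ C) (hS : IsCompact S)
    (hSμ : ∀ᵐ w ∂μ, w ∈ S) (hr : 0 < r) (a : ℝ) (hz : z ∉ S) :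
    IsAnalyticModulusAt (potWeight μ r a) z := by
  obtain ⟨ε, hε0, hε⟩ : ∃ ε > 0, ∀ w ∈ S, ε ≤ dist z w := by
    obtain ⟨ε, hε0, hball⟩ := Metric.isOpen_iff.1 hS.isClosed.isOpen_compl z hz
    exact ⟨ε, hε0, fun w hw => not_lt.1 fun hlt => hball (mem_ball'.2 hlt) hw⟩
  have hV := (differentiableOn_integral_clog_sub_div_sub hS hSμ hε).analyticAt
    (ball_mem_nhds z (half_pos hε0))
  refine ⟨fun y => Complex.exp (-(a / r : ℝ) *
    (∫ w, Complex.log ((y - w) / (z - w)) ∂μ + logPot μ r z)), by fun_prop, ?_⟩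
  filter_upwards [ball_mem_nhds z hε0] with y hy
  rw [Complex.norm_exp, ← ofReal_neg, re_ofReal_mul, add_re, ofReal_re,
    re_integral_clog_sub_div_sub hμ hS hSμ hε hr hy, sub_add_cancel, neg_mul, potWeight]

end LogPotHolomorphic

/-! ### Harnack's inequality -/

theorem harnack_of_harmonicOnNhd_closedBall {u : ℂ → ℝ} {c z : ℂ} {r : ℝ}
    (hu : InnerProductSpace.HarmonicOnNhd u (closedBall c r)) (hu0 : ∀ y ∈ sphere c r, 0 ≤ u y)
    (hz : z ∈ ball c r) : (r - dist z c) * u c ≤ (r + dist z c) * u z := by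
  have hr : 0 < r := pos_of_mem_ball hz
  have hsphere : sphere c |r| = sphere c r := by rw [abs_of_pos hr]
  have hcont : ContinuousOn u (sphere c |r|) := fun y hy =>
    (hu y (sphere_subset_closedBall (hsphere ▸ hy))).1.continuousAt.continuousWithinAt
  have hmean : Real.circleAverage u c r = u c :=
    InnerProductSpace.HarmonicOnNhd.circleAverage_eq (by rwa [abs_of_pos hr])
  have hle : (r - dist z c) / (r + dist z c) * u c ≤ u z :=
    calc (r - dist z c) / (r + dist z c) * u c
        = Real.circleAverage (((r - dist z c) / (r + dist z c)) • u) c r := by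
          rw [Real.circleAverage_smul, hmean, smul_eq_mul]
      _ ≤ Real.circleAverage ((re ∘ herglotzRieszKernel c z) • u) c r := by
          refine Real.circleAverage_mono (hcont.const_smul _).circleIntegrable'
            (((continuous_re.comp_continuousOn
              (continuousOn_herglotzRieszKernel_sphere hz)).smul hcont).circleIntegrable')
            fun y hy => ?_
          rw [hsphere] at hy
          simpa only [dist_eq_norm] using!
            mul_le_mul_of_nonneg_right (le_re_herglotzRieszKernel hy hz) (hu0 y hy)
      _ = u z := hu.circleAverage_re_herglotzRieszKernel_smul hz
  have hpos : 0 < r + dist z c := add_pos_of_pos_of_nonneg hr dist_nonneg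
  rwa [div_mul_eq_mul_div, div_le_iff₀' hpos] at hle

theorem harnack_of_harmonicOnNhd_ball {u : ℂ → ℝ} {c z : ℂ} {r : ℝ}
    (hu : InnerProductSpace.HarmonicOnNhd u (ball c r)) (hu0 : ∀ y ∈ ball c r, 0 ≤ u y)
    (hz : z ∈ ball c r) : (r - dist z c) * u c ≤ (r + dist z c) * u z := by
  refine le_of_tendsto_of_tendsto (b := 𝓝[<] r) (f := fun r' => (r' - dist z c) * u c)
    (g := fun r' => (r' + dist z c) * u z)
    (Continuous.tendsto' (by fun_prop) _ _ rfl |>.mono_left nhdsWithin_le_nhds)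
    (Continuous.tendsto' (by fun_prop) _ _ rfl |>.mono_left nhdsWithin_le_nhds) ?_
  filter_upwards [Ioo_mem_nhdsLT (mem_ball.1 hz)] with r' hr'
  have hsub : closedBall c r' ⊆ ball c r := closedBall_subset_ball hr'.2
  exact harnack_of_harmonicOnNhd_closedBall (fun y hy => hu y (hsub hy))
    (fun y hy => hu0 y (hsub (sphere_subset_closedBall hy))) hr'.1

/-! ### The exterior conformal map -/

theorem isPreconnected_setOf_lt_norm {r : ℝ} (hr : 0 < r) :
    IsPreconnected {w : ℂ | r < ‖w‖} := by
  have himage : {w : ℂ | r < ‖w‖} = Complex.exp '' {z : ℂ | Real.log r < z.re} := by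
    ext w
    refine ⟨fun hw => ⟨Complex.log w, ?_, exp_log (norm_pos_iff.1 (hr.trans hw))⟩, ?_⟩
    · exact (Real.log_lt_log hr hw).trans_eq (log_re w).symm
    · rintro ⟨z, hz, rfl⟩
      exact ((Real.log_lt_iff_lt_exp hr).1 hz).trans_eq (norm_exp z).symm
  rw [himage]
  exact (convex_halfSpace_re_gt _).isPreconnected.image _ Complex.continuous_exp.continuousOn

section UnboundedComponent

variable {Γ : Set ℂ}

theorem mem_unboundedComponent_of_isPreconnected {V : Set ℂ} (hV : IsPreconnected V)
    (hVΓ : V ⊆ Γᶜ) {y z : ℂ} (hy : y ∈ V) (hz : z ∈ V) (hzΓ : z ∈ unboundedComponent Γ) :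
    y ∈ unboundedComponent Γ := by
  refine ⟨hVΓ hy, ?_⟩
  rw [← connectedComponentIn_eq (hV.subset_connectedComponentIn hz hVΓ hy)]
  exact hzΓ.2

theorem isOpen_unboundedComponent (hΓ : IsClosed Γ) : IsOpen (unboundedComponent Γ) := by
  refine Metric.isOpen_iff.2 fun z hz => ?_
  obtain ⟨ε, hε, hball⟩ := Metric.isOpen_iff.1 hΓ.isOpen_compl z hz.1
  exact ⟨ε, hε, fun y hy => mem_unboundedComponent_of_isPreconnected isPreconnected_ball hball hy
    (mem_ball_self hε) hz⟩

theorem isOpen_compl_diff_unboundedComponent (hΓ : IsClosed Γ) :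
    IsOpen (Γᶜ \ unboundedComponent Γ) := by
  refine Metric.isOpen_iff.2 fun z hz => ?_
  obtain ⟨ε, hε, hball⟩ := Metric.isOpen_iff.1 hΓ.isOpen_compl z hz.1
  exact ⟨ε, hε, fun y hy => ⟨hball hy, fun hyΩ => hz.2 (mem_unboundedComponent_of_isPreconnected
    isPreconnected_ball hball (mem_ball_self hε) hy hyΩ)⟩⟩

theorem eventually_mem_unboundedComponent (hΓ : IsBounded Γ) :
    ∀ᶠ z in cobounded ℂ, z ∈ unboundedComponent Γ := by
  obtain ⟨R, hR, hΓR⟩ := hΓ.exists_pos_norm_le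
  have hV : {z : ℂ | R < ‖z‖} ⊆ Γᶜ := fun z hz hzΓ => (hΓR z hzΓ).not_gt hz
  filter_upwards [tendsto_norm_cobounded_atTop.eventually_gt_atTop R] with z hz
  refine ⟨hV hz, fun hbdd => ?_⟩
  obtain ⟨B, hB⟩ := (hbdd.subset ((isPreconnected_setOf_lt_norm hR).subset_connectedComponentIn
    hz hV)).exists_norm_le
  obtain ⟨y, hyR, hyB⟩ := ((tendsto_norm_cobounded_atTop (E := ℂ)).eventually_gt_atTop R |>.and
    (tendsto_norm_cobounded_atTop.eventually_gt_atTop B)).exists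
  exact (hB y hyR).not_gt hyB

end UnboundedComponent

namespace IsExtConformal

variable {Ω : Set ℂ} {Φ : ℂ → ℂ}

theorem one_lt_norm (hΦ : IsExtConformal Ω Φ) {z : ℂ} (hz : z ∈ Ω) : 1 < ‖Φ z‖ :=
  hΦ.2.1.mapsTo hz

theorem id_isBigO (hΦ : IsExtConformal Ω Φ) : id =O[cobounded ℂ] Φ := by
  obtain ⟨-, -, c, hc, hlim⟩ := hΦ
  have hinv := hlim.inv₀ (ofReal_ne_zero.2 hc.ne')
  refine Asymptotics.isBigO_of_div_tendsto_nhds ?_ _ (hinv.congr fun z => inv_div _ _)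
  filter_upwards [hlim.eventually_ne (ofReal_ne_zero.2 hc.ne')] with z hz hz0
  simp [hz0] at hz

theorem tendsto_norm_atTop (hΦ : IsExtConformal Ω Φ) :
    Tendsto (fun z => ‖Φ z‖) (cobounded ℂ) atTop :=
  hΦ.id_isBigO.trans_tendsto_norm_atTop tendsto_norm_cobounded_atTop

theorem isBigO_eval_pow (hΦ : IsExtConformal Ω Φ) {n : ℕ} {P : Polynomial ℂ}
    (hP : P.natDegree ≤ n) : (fun z => P.eval z) =O[cobounded ℂ] fun z => Φ z ^ n := by
  have hX : (fun z => P.eval z) =O[cobounded ℂ] fun z => (Polynomial.X ^ n : Polynomial ℂ).eval z :=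
    Polynomial.isBigO_cobounded_of_degree_le
      ((Polynomial.degree_le_of_natDegree_le hP).trans_eq (Polynomial.degree_X_pow n).symm)
  simp only [Polynomial.eval_pow, Polynomial.eval_X] at hX
  exact hX.trans (hΦ.id_isBigO.pow n)

theorem continuousOn_invFunOn (hΦ : IsExtConformal Ω Φ) (hΩ : IsOpen Ω) :
    ContinuousOn (Function.invFunOn Φ Ω) extDisk := by
  intro w hw
  obtain ⟨z, hz, rfl⟩ := hΦ.2.1.surjOn hw
  have hleft : ∀ y ∈ Ω, Function.invFunOn Φ Ω (Φ y) = y := hΦ.2.1.invOn_invFunOn.1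
  have hΩz : ∀ᶠ y in 𝓝 z, y ∈ Ω := hΩ.mem_nhds hz
  have hopen : 𝓝 (Φ z) ≤ map Φ (𝓝 z) := by
    refine (hΦ.1.analyticAt hΩz).eventually_constant_or_nhds_le_map_nhds.resolve_left
      fun hconst => ?_
    obtain ⟨y, ⟨hy, hyΩ⟩, hyz⟩ :=
      ((hconst.and hΩz).filter_mono nhdsWithin_le_nhds |>.and
        (self_mem_nhdsWithin (s := {z}ᶜ))).exists
    exact hyz (hΦ.2.1.injOn hyΩ hz hy)
  refine ContinuousAt.continuousWithinAt (Tendsto.mono_left ?_ hopen)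
  rw [hleft z hz, tendsto_map'_iff]
  exact tendsto_id.congr' (hΩz.mono fun y hy => (hleft y hy).symm)

theorem exists_lt_norm_of_lt_norm (hΦ : IsExtConformal Ω Φ) (hΩ : IsOpen Ω)
    (hΩ' : ∀ᶠ z in cobounded ℂ, z ∈ Ω) (R : ℝ) :
    ∃ r, ∀ z ∈ Ω, r < ‖Φ z‖ → R < ‖z‖ := by
  obtain ⟨hleft, hright⟩ := hΦ.2.1.invOn_invFunOn
  have hmaps : MapsTo (Function.invFunOn Φ Ω) extDisk Ω := hΦ.2.1.surjOn.mapsTo_invFunOn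
  set Ψ := Function.invFunOn Φ Ω
  obtain ⟨R', hRR', hR'Ω⟩ : ∃ R' > R, {z : ℂ | R' ≤ ‖z‖} ⊆ Ω := by
    obtain ⟨R₁, -, hR₁⟩ := (hasBasis_cobounded_norm (E := ℂ)).mem_iff.1 hΩ'
    exact ⟨max R₁ (R + 1), by simp, fun z hz => hR₁ ((le_max_left R₁ _).trans (mem_ofPred_eq ▸ hz))⟩
  obtain ⟨B, hB⟩ := ((isCompact_sphere (0 : ℂ) R').image_of_continuousOn
    (hΦ.1.continuousOn.mono fun z hz =>
      hR'Ω (mem_sphere_zero_iff_norm.1 hz).ge)).isBounded.exists_norm_le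
  have hBdisk : {w : ℂ | max B 1 < ‖w‖} ⊆ extDisk := fun w hw => (le_max_right B 1).trans_lt hw
  have hconn := (isPreconnected_setOf_lt_norm (zero_lt_one.trans_le (le_max_right B 1))).image
    (fun w => ‖Ψ w‖) ((hΦ.continuousOn_invFunOn hΩ).norm.mono hBdisk)
  refine ⟨max B 1, fun z hz hzB => ?_⟩
  by_contra! hzR
  obtain ⟨z', hz'R, hz'B⟩ := ((tendsto_norm_cobounded_atTop (E := ℂ)).eventually_ge_atTop R' |>.and
    (hΦ.tendsto_norm_atTop.eventually_gt_atTop (max B 1))).exists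
  obtain ⟨w, hw, hwR'⟩ := hconn.Icc_subset ⟨Φ z, hzB, rfl⟩ ⟨Φ z', hz'B, rfl⟩
    (show R' ∈ Icc ‖Ψ (Φ z)‖ ‖Ψ (Φ z')‖ by
      rw [hleft hz, hleft (hR'Ω hz'R)]
      exact ⟨hzR.trans hRR'.le, hz'R⟩)
  have hwB : ‖w‖ ≤ B := hB w ⟨Ψ w, mem_sphere_zero_iff_norm.2 hwR', hright (hBdisk hw)⟩
  exact (hwB.trans (le_max_left B 1)).not_gt hw

theorem eventually_norm_lt (hΦ : IsExtConformal Ω Φ) (hΩ : IsOpen Ω)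
    (hΩ' : ∀ᶠ z in cobounded ℂ, z ∈ Ω) {ζ : ℂ} (hζ : ζ ∉ Ω) {δ : ℝ} (hδ : 0 < δ) :
    ∀ᶠ z in 𝓝[Ω] ζ, ‖Φ z‖ < 1 + δ := by
  obtain ⟨r, hr⟩ := hΦ.exists_lt_norm_of_lt_norm hΩ hΩ' (‖ζ‖ + 1)
  set A : Set ℂ := closedBall 0 r ∩ {w | 1 + δ ≤ ‖w‖}
  have hA : IsCompact A :=
    (isCompact_closedBall 0 r).inter_right (isClosed_le continuous_const continuous_norm)
  have hAdisk : A ⊆ extDisk := fun w hw => (lt_add_of_pos_right 1 hδ).trans_le hw.2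
  have hK : IsCompact (Function.invFunOn Φ Ω '' A) :=
    hA.image_of_continuousOn ((hΦ.continuousOn_invFunOn hΩ).mono hAdisk)
  have hζK : ζ ∉ Function.invFunOn Φ Ω '' A := by
    rintro ⟨w, hw, rfl⟩
    exact hζ (hΦ.2.1.surjOn.mapsTo_invFunOn (hAdisk hw))
  filter_upwards [self_mem_nhdsWithin,
    nhdsWithin_le_nhds (hK.isClosed.isOpen_compl.mem_nhds hζK), nhdsWithin_le_nhds
      (continuous_norm.continuousAt.eventually_lt_const (lt_add_one ‖ζ‖))] with z hz hzK hzζ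
  by_contra! hzδ
  have hzr : ‖Φ z‖ ≤ r := not_lt.1 fun hlt => (hr z hz hlt).not_gt hzζ
  exact hzK ⟨Φ z, ⟨mem_closedBall_zero_iff.2 hzr, hzδ⟩, hΦ.2.1.invOn_invFunOn.1 hz⟩

theorem norm_lt_of_disjoint_levelCurve (hΦ : IsExtConformal Ω Φ) (hΩ : IsOpen Ω)
    (hΩ' : ∀ᶠ z in cobounded ℂ, z ∈ Ω) {ζ : ℂ} (hζ : ζ ∉ Ω) {δ : ℝ} (hδ : 0 < δ) {V : Set ℂ}
    (hV : IsPreconnected V) (hVΩ : V ⊆ Ω) (hζV : ζ ∈ closure V)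
    (hVδ : Disjoint V (levelCurve Ω Φ δ)) {z : ℂ} (hz : z ∈ V) : ‖Φ z‖ < 1 + δ := by
  by_contra! hzδ
  have := mem_closure_iff_nhdsWithin_neBot.1 hζV
  obtain ⟨y, hyδ, hyV⟩ := ((hΦ.eventually_norm_lt hΩ hΩ' hζ hδ).filter_mono
    (nhdsWithin_mono ζ hVΩ) |>.and self_mem_nhdsWithin).exists
  obtain ⟨x, hxV, hx⟩ := hV.intermediate_value hyV hz (hΦ.1.continuousOn.mono hVΩ).norm
    ⟨hyδ.le, hzδ⟩
  exact disjoint_left.1 hVδ hxV ⟨hVΩ hxV, hx⟩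

theorem sub_dist_mul_log_norm_le (hΦ : IsExtConformal Ω Φ) {z q : ℂ} {d : ℝ}
    (hball : ball z d ⊆ Ω) (hq : q ∈ ball z d) :
    (d - dist q z) * Real.log ‖Φ z‖ ≤ (d + dist q z) * Real.log ‖Φ q‖ :=
  harnack_of_harmonicOnNhd_ball (u := fun y => Real.log ‖Φ y‖)
    (fun _ hy => AnalyticAt.harmonicAt_log_norm
      ((hΦ.1.mono hball).analyticAt (isOpen_ball.mem_nhds hy))
      (norm_pos_iff.1 (zero_lt_one.trans (hΦ.one_lt_norm (hball hy)))))
    (fun _ hy => Real.log_nonneg (hΦ.one_lt_norm (hball hy)).le) hq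

theorem exists_dist_eq_norm_lt (hΦ : IsExtConformal Ω Φ) (hΩ : IsOpen Ω)
    (hΩ' : ∀ᶠ z in cobounded ℂ, z ∈ Ω) {ζ z : ℂ} {s δ : ℝ} (hs : 0 < s) (hδ : 0 < δ)
    (hζ : ζ ∉ Ω) (hζz : 0 < dist ζ z) (hball : ball z (dist ζ z) ⊆ Ω)
    (hζs : ∀ y ∈ levelCurve Ω Φ δ, s ≤ dist y ζ) :
    ∃ q, dist q z = dist ζ z - min (dist ζ z) s / 2 ∧ ‖Φ q‖ < 1 + δ := by
  set d := dist ζ z with hd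
  have hm : 0 < min d s := lt_min hζz hs
  obtain ⟨q, hqζ, hqz⟩ := exists_dist_eq ζ z (a := 1 - min d s / (2 * d)) (b := min d s / (2 * d))
    (by rw [sub_nonneg, div_le_one (by positivity)]; linarith [min_le_left d s])
    (by positivity) (by ring)
  replace hqζ : dist q ζ = min d s / 2 := by
    rw [dist_comm, hqζ, ← hd]; field_simp
  replace hqz : dist q z = d - min d s / 2 := by
    rw [hqz, ← hd]; field_simp
  refine ⟨q, hqz, hΦ.norm_lt_of_disjoint_levelCurve hΩ hΩ' hζ hδ (V := ball ζ s ∩ ball z d)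
    ((convex_ball ζ s).inter (convex_ball z d)).isPreconnected (inter_subset_right.trans hball)
    (isOpen_ball.inter_closure ⟨mem_ball_self hs, ?_⟩)
    (disjoint_left.2 fun y hy hyδ => (hζs y hyδ).not_gt hy.1) ⟨?_, ?_⟩⟩
  · exact (closure_ball z hζz.ne').ge (mem_closedBall.2 le_rfl)
  · rw [mem_ball, hqζ]
    linarith [min_le_right d s]
  · rw [mem_ball, hqz]
    linarith

theorem log_norm_le_of_infDist_le {Γ : Set ℂ} (hΓ : IsCompact Γ) (hΓne : Γ.Nonempty)
    (hΦ : IsExtConformal (unboundedComponent Γ) Φ) {s δ K : ℝ} (hs : 0 < s) (hδ : 0 < δ)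
    (hK : 1 ≤ K) (hsΓ : ∀ ζ ∈ Γ, ∀ y ∈ levelCurve (unboundedComponent Γ) Φ δ, s ≤ dist y ζ)
    {z : ℂ} (hz : z ∈ unboundedComponent Γ) (hzK : infDist z Γ ≤ K * s) :
    Real.log ‖Φ z‖ ≤ 4 * K * δ := by
  obtain ⟨ζ, hζ, hζz⟩ := hΓ.exists_infDist_eq_dist hΓne z
  rw [dist_comm] at hζz
  have hd : 0 < dist ζ z := dist_pos.2 fun hζz => hz.1 (hζz ▸ hζ)
  have hball : ball z (dist ζ z) ⊆ unboundedComponent Γ := fun y hy =>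
    mem_unboundedComponent_of_isPreconnected isPreconnected_ball
      (hζz ▸ disjoint_ball_infDist.subset_compl_right) hy (mem_ball_self hd) hz
  obtain ⟨q, hqz, hqδ⟩ := hΦ.exists_dist_eq_norm_lt (isOpen_unboundedComponent hΓ.isClosed)
    (eventually_mem_unboundedComponent hΓ.isBounded) hs hδ (fun hζΩ => hζΩ.1 hζ) hd hball (hsΓ ζ hζ)
  set d := dist ζ z
  have hm : 0 < min d s := lt_min hd hs
  have hqball : q ∈ ball z d := by rw [mem_ball, hqz]; linarith
  have hΦq := hΦ.one_lt_norm (hball hqball)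
  have hlogq : Real.log ‖Φ q‖ ≤ δ := by
    linarith [Real.log_le_sub_one_of_pos (zero_lt_one.trans hΦq)]
  have hdK : d ≤ K * min d s := by
    rw [mul_min_of_nonneg _ _ (by positivity)]
    exact le_min (le_mul_of_one_le_left hd.le hK) (hζz ▸ hzK)
  refine le_of_mul_le_mul_left ?_ (half_pos hm)
  calc min d s / 2 * Real.log ‖Φ z‖
      = (d - dist q z) * Real.log ‖Φ z‖ := by rw [hqz, sub_sub_cancel]
    _ ≤ (d + dist q z) * Real.log ‖Φ q‖ := hΦ.sub_dist_mul_log_norm_le hball hqball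
    _ ≤ (2 * (K * min d s)) * δ := by
        gcongr
        · exact Real.log_nonneg hΦq.le
        · linarith
    _ = min d s / 2 * (4 * K * δ) := by ring

end IsExtConformal

/-! ### A weighted Bernstein–Walsh inequality -/

open Classical in
/-- The exponential of the Green function of `Ω` with pole at infinity, where `Φ` is the conformal
map of `Ω` onto `extDisk`; it is extended by `1` off `Ω`. -/
def greenExp (Ω : Set ℂ) (Φ : ℂ → ℂ) (z : ℂ) : ℝ :=
  if z ∈ Ω then ‖Φ z‖ else 1

section GreenExp

variable {Ω : Set ℂ} {Φ : ℂ → ℂ}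

theorem one_le_greenExp (hΦ : IsExtConformal Ω Φ) (z : ℂ) : 1 ≤ greenExp Ω Φ z := by
  unfold greenExp
  split_ifs with hz
  exacts [(hΦ.one_lt_norm hz).le, le_rfl]

variable {Γ : Set ℂ}

theorem isAnalyticModulusAt_greenExp (hΓ : IsClosed Γ)
    (hΦ : IsExtConformal (unboundedComponent Γ) Φ) {z : ℂ} (hz : z ∉ Γ) :
    IsAnalyticModulusAt (greenExp (unboundedComponent Γ) Φ) z := by
  by_cases hzΩ : z ∈ unboundedComponent Γ
  · have hnhds := (isOpen_unboundedComponent hΓ).mem_nhds hzΩ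
    exact (isAnalyticModulusAt_norm (hΦ.1.analyticAt hnhds)).congr
      (eventually_of_mem hnhds fun y hy => if_pos hy)
  · exact (isAnalyticModulusAt_norm (analyticAt_const (v := (1 : ℂ)))).congr
      (eventually_of_mem ((isOpen_compl_diff_unboundedComponent hΓ).mem_nhds ⟨hz, hzΩ⟩)
        fun y hy => (if_neg hy.2).trans norm_one.symm)

theorem greenExp_le_exp (hΓ : IsCompact Γ) (hΓne : Γ.Nonempty)
    (hΦ : IsExtConformal (unboundedComponent Γ) Φ) {s δ K : ℝ} (hs : 0 < s) (hδ : 0 < δ)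
    (hK : 1 ≤ K) (hsΓ : ∀ ζ ∈ Γ, ∀ y ∈ levelCurve (unboundedComponent Γ) Φ δ, s ≤ dist y ζ)
    {z : ℂ} (hzK : infDist z Γ ≤ K * s) :
    greenExp (unboundedComponent Γ) Φ z ≤ Real.exp (4 * K * δ) := by
  unfold greenExp
  split_ifs with hz
  · rw [← Real.log_le_iff_le_exp (zero_lt_one.trans (hΦ.one_lt_norm hz))]
    exact IsExtConformal.log_norm_le_of_infDist_le hΓ hΓne hΦ hs hδ hK hsΓ hz hzK
  · exact Real.one_le_exp (by positivity)

/-- The weight `w` need not be continuous on `Γ`; its continuous majorant `W` takes its place in the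
boundary hypothesis. -/
theorem norm_eval_mul_le_greenExp_pow (hΓ : IsCompact Γ)
    (hΦ : IsExtConformal (unboundedComponent Γ) Φ) {n : ℕ} {P : Polynomial ℂ}
    (hP : P.natDegree ≤ n) {w W : ℂ → ℝ} (hw : ∀ z ∉ Γ, IsAnalyticModulusAt w z)
    (hw0 : ∀ z, 0 ≤ w z) (hwW : ∀ z, w z ≤ W z) (hW : Continuous W)
    (hW0 : Tendsto W (cobounded ℂ) (𝓝 0)) {M : ℝ} (hM0 : 0 ≤ M)
    (hM : ∀ ζ ∈ Γ, ‖P.eval ζ‖ * W ζ ≤ M) {z : ℂ} (hz : z ∉ Γ) :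
    ‖P.eval z‖ * w z ≤ M * greenExp (unboundedComponent Γ) Φ z ^ n := by
  set g := greenExp (unboundedComponent Γ) Φ
  have hg0 : ∀ y, 0 < g y := fun y => zero_lt_one.trans_le (one_le_greenExp hΦ y)
  have hle : ∀ y, ‖P.eval y‖ * w y / g y ^ n ≤ ‖P.eval y‖ * W y := fun y =>
    (div_le_self (mul_nonneg (norm_nonneg _) (hw0 y)) (one_le_pow₀ (one_le_greenExp hΦ y))).trans
      (mul_le_mul_of_nonneg_left (hwW y) (norm_nonneg _))
  rw [← div_le_iff₀ (pow_pos (hg0 z) n)]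
  refine le_of_isAnalyticModulusAt hΓ.isClosed.isOpen_compl
    (h := fun y => ‖P.eval y‖ * w y / g y ^ n) (fun y hy => ?_) (fun ζ hζ M' hM' => ?_)
    (fun M' hM' => ?_) hz
  · exact ((isAnalyticModulusAt_norm (P.differentiable.analyticAt y)).mul (hw y hy)).div_pow
      (isAnalyticModulusAt_greenExp hΓ.isClosed hΦ hy) (hg0 y).ne' n
  · have hζΓ : ζ ∈ Γ := hΓ.isClosed.frontier_subset (frontier_compl Γ ▸ hζ)
    have hcont : Continuous fun y => ‖P.eval y‖ * W y := P.continuous.norm.mul hW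
    exact nhdsWithin_le_nhds ((hcont.continuousAt.eventually_lt_const
      ((hM ζ hζΓ).trans_lt hM')).mono fun y hy => (hle y).trans_lt hy)
  · obtain ⟨B, hB, hBP⟩ := (hΦ.isBigO_eval_pow hP).exists_pos
    have hBW : Tendsto (fun y => B * W y) (cobounded ℂ) (𝓝 0) := by simpa using hW0.const_mul B
    refine Filter.Eventually.filter_mono inf_le_left ?_
    filter_upwards [hBP.bound, eventually_mem_unboundedComponent hΓ.isBounded,
      hBW.eventually_lt_const (hM0.trans_lt hM')] with y hyB hyΩ hyM
    have hgy : g y = ‖Φ y‖ := if_pos hyΩ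
    rw [norm_pow, ← hgy] at hyB
    calc ‖P.eval y‖ * w y / g y ^ n ≤ B * g y ^ n * w y / g y ^ n := by
          gcongr
          · exact (pow_pos (hg0 y) n).le
          · exact hw0 y
      _ = B * w y := by field_simp [(hg0 y).ne']
      _ ≤ B * W y := by gcongr; exact hwW y
      _ < M' := hyM

theorem norm_eval_le_of_le_mul_rpow (hΓ : IsCompact Γ)
    (hΦ : IsExtConformal (unboundedComponent Γ) Φ) {n : ℕ} {P : Polynomial ℂ}
    (hP : P.natDegree ≤ n) {μ : Measure ℂ} [IsFiniteMeasure μ] {C : ℝ≥0}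
    (hμ : HasLinearGrowth μ C) {S : Set ℂ} (hS : IsCompact S) (hSΓ : S ⊆ Γ)
    (hSμ : ∀ᵐ w ∂μ, w ∈ S) {r : ℝ} (hr : 0 < r) (hμr : μ.real univ = r) {ζ₀ : ℂ}
    (hζ₀ : ∀ w ∈ S, dist w ζ₀ ≤ r) {a : ℝ} (ha : 0 < a) {M : ℝ} (hM0 : 0 ≤ M)
    (hM : ∀ ξ ∈ Γ, ‖P.eval ξ‖ ≤ M * (1 + dist ξ ζ₀ / r) ^ a) {z : ℂ} (hz : z ∉ Γ) :
    ‖P.eval z‖ ≤ M * Real.exp (a * (Real.log 3 + 2 * C)) * (1 + dist z ζ₀ / r) ^ a *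
      greenExp (unboundedComponent Γ) Φ z ^ n := by
  set b := Real.exp (a * (Real.log 3 + 2 * C))
  set D : ℂ → ℝ := fun y => 1 + dist y ζ₀ / r
  have hD : ∀ y, 0 < D y := fun y => by positivity
  have hDc : Continuous D := by fun_prop
  have hW0 : Tendsto (fun y => b * D y ^ (-a)) (cobounded ℂ) (𝓝 0) := by
    have hDtop : Tendsto D (cobounded ℂ) atTop :=
      tendsto_atTop_add_const_left _ _ ((tendsto_dist_right_cobounded_atTop ζ₀).atTop_div_const hr)
    simpa using ((tendsto_rpow_neg_atTop ha).comp hDtop).const_mul b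
  have hbw := norm_eval_mul_le_greenExp_pow hΓ hΦ hP (w := potWeight μ r a)
    (W := fun y => b * D y ^ (-a)) (M := M * b)
    (fun y hy => isAnalyticModulusAt_potWeight hμ hS hSμ hr a fun hyS => hy (hSΓ hyS))
    (fun y => (Real.exp_pos _).le)
    (potWeight_le_mul_rpow_neg hμ hS.isBounded hSμ hr hμr hζ₀ ha.le)
    (continuous_const.mul (hDc.rpow_const fun y => Or.inl (hD y).ne')) hW0
    (by positivity) (fun ζ hζ => ?_) hz
  · have hDz : 0 < D z ^ a := Real.rpow_pos_of_pos (hD z) a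
    have hlow := rpow_neg_le_potWeight hμ hS.isBounded hSμ hr hμr hζ₀ ha.le z
    calc ‖P.eval z‖ = ‖P.eval z‖ * D z ^ (-a) * D z ^ a := by
          rw [Real.rpow_neg (hD z).le, inv_mul_cancel_right₀ hDz.ne']
      _ ≤ ‖P.eval z‖ * potWeight μ r a z * D z ^ a := by gcongr
      _ ≤ M * b * greenExp (unboundedComponent Γ) Φ z ^ n * D z ^ a := by gcongr
      _ = _ := by ring
  · have hDζ : 0 < D ζ ^ a := Real.rpow_pos_of_pos (hD ζ) a
    calc ‖P.eval ζ‖ * (b * D ζ ^ (-a)) ≤ M * D ζ ^ a * (b * D ζ ^ (-a)) := by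
          gcongr
          exact hM ζ hζ
      _ = M * b := by
          rw [Real.rpow_neg (hD ζ).le]
          field_simp

end GreenExp

/-! ### Periodic parametrizations of a Jordan curve -/

theorem ofReal_dist_le_hausdorffMeasure {X : Type*} [MetricSpace X] [MeasurableSpace X]
    [BorelSpace X] {J : Set X} (hJ : IsPreconnected J) {x y : X} (hx : x ∈ J) (hy : y ∈ J) :
    ENNReal.ofReal (dist x y) ≤ μH[1] J := by
  have hsub : Icc 0 (dist x y) ⊆ (dist · x) '' J :=
    (hJ.image _ (by fun_prop)).Icc_subset ⟨x, hx, dist_self x⟩ ⟨y, hy, dist_comm y x⟩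
  calc ENNReal.ofReal (dist x y) = μH[1] (Icc 0 (dist x y)) := by
        rw [hausdorffMeasure_real, Real.volume_Icc, sub_zero]
    _ ≤ μH[1] ((dist · x) '' J) := measure_mono hsub
    _ ≤ μH[1] J := by
        simpa using (LipschitzWith.dist_left x).hausdorffMeasure_image_le zero_le_one J

theorem uniformContinuous_of_periodic {X : Type*} [UniformSpace X]
    {f : ℝ → X} {T : ℝ} (hf : Function.Periodic f T) (hT : 0 < T) (hc : Continuous f) :
    UniformContinuous f := by
  have : Fact (0 < T) := ⟨hT⟩
  have hlift : Continuous (hf.lift : AddCircle T → X) := continuous_coinduced_dom.2 hc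
  exact (CompactSpace.uniformContinuous_of_continuous hlift).comp
    (uniformContinuous_addMonoidHom_of_continuous (f := QuotientAddGroup.mk' _)
      (AddCircle.continuous_mk' T))

/-- `β` is a `T`-periodic parametrization of the closed curve `Γ`, injective modulo periods. -/
structure IsPeriodicParam (Γ : Set ℂ) (T : ℝ) (β : ℝ → ℂ) : Prop where
  pos : 0 < T
  continuous : Continuous β
  range_eq : range β = Γ
  eq_iff : ∀ u v, β u = β v ↔ ∃ k : ℤ, u = v + k * T

theorem IsJordanCurve.exists_isPeriodicParam {Γ : Set ℂ} (hΓ : IsJordanCurve Γ) :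
    ∃ β, IsPeriodicParam Γ 1 β := by
  obtain ⟨γ, hγ, hinj, rfl⟩ := hΓ
  have hmem (t : ℝ) : circleMap 0 1 (2 * Real.pi * t) ∈ sphere (0 : ℂ) 1 :=
    circleMap_mem_sphere 0 zero_le_one _
  refine ⟨fun t => γ (circleMap 0 1 (2 * Real.pi * t)), one_pos,
    hγ.comp_continuous (by fun_prop) hmem, ?_, fun u v => ?_⟩
  · have hsurj : Function.Surjective fun t : ℝ => 2 * Real.pi * t :=
      mul_left_surjective₀ Real.two_pi_pos.ne'
    rw [← abs_one (α := ℝ), ← range_circleMap, abs_one, ← range_comp]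
    exact hsurj.range_comp (γ ∘ circleMap 0 1)
  · rw [hinj.eq_iff (hmem u) (hmem v), circleMap, circleMap]
    simp only [ofReal_one, one_mul, zero_add, exp_eq_exp_iff_exists_int]
    refine exists_congr fun k => ?_
    rw [← ofReal_inj, ← mul_right_inj' two_pi_I_ne_zero (b := (u : ℂ))]
    push_cast
    constructor <;> intro heq <;> linear_combination heq

namespace IsPeriodicParam

variable {Γ : Set ℂ} {T : ℝ} {β : ℝ → ℂ}

theorem apply_add_int (h : IsPeriodicParam Γ T β) (t : ℝ) (k : ℤ) : β (t + k * T) = β t :=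
  (h.eq_iff _ _).2 ⟨k, rfl⟩

theorem periodic (h : IsPeriodicParam Γ T β) : Function.Periodic β T := fun t => by
  simpa using h.apply_add_int t 1

theorem mem (h : IsPeriodicParam Γ T β) (t : ℝ) : β t ∈ Γ := h.range_eq ▸ mem_range_self t

theorem exists_int_mem_Ico (h : IsPeriodicParam Γ T β) (a v : ℝ) :
    ∃ k : ℤ, v + k * T ∈ Ico a (a + T) := by
  obtain ⟨k, hk, -⟩ := existsUnique_add_zsmul_mem_Ico h.pos v a
  exact ⟨k, by simpa using hk⟩

theorem exists_mem_Ico (h : IsPeriodicParam Γ T β) (a : ℝ) {ζ : ℂ} (hζ : ζ ∈ Γ) :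
    ∃ v ∈ Ico a (a + T), β v = ζ := by
  obtain ⟨v, rfl⟩ := h.range_eq.symm ▸ hζ
  obtain ⟨k, hk⟩ := h.exists_int_mem_Ico a v
  exact ⟨_, hk, h.apply_add_int v k⟩

theorem injOn (h : IsPeriodicParam Γ T β) (a : ℝ) : InjOn β (Ico a (a + T)) := by
  intro u hu v hv huv
  obtain ⟨k, hk⟩ := (h.eq_iff _ _).1 huv
  have hT := h.pos
  have hk_lt : k < 1 := by
    have : (k : ℝ) < 1 := by
      by_contra! hk1
      nlinarith [hu.2, hv.1]
    exact_mod_cast this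
  have hlt_k : -1 < k := by
    have : (-1 : ℝ) < k := by
      by_contra! hk1
      nlinarith [hu.1, hv.2]
    exact_mod_cast this
  obtain rfl : k = 0 := by lia
  simpa using hk

theorem image_Icc_eq (h : IsPeriodicParam Γ T β) {a b : ℝ} (hab : a + T ≤ b) :
    β '' Icc a b = Γ := by
  refine Subset.antisymm (image_subset_iff.2 fun t _ => h.mem t) fun ζ hζ => ?_
  obtain ⟨v, hv, rfl⟩ := h.exists_mem_Ico a hζ
  exact ⟨v, ⟨hv.1, hv.2.le.trans hab⟩, rfl⟩

theorem subset_image_Icc_union (h : IsPeriodicParam Γ T β) (a b : ℝ) :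
    Γ ⊆ β '' Icc a b ∪ β '' Icc b (a + T) := by
  intro ζ hζ
  obtain ⟨v, hv, rfl⟩ := h.exists_mem_Ico a hζ
  exact (le_total v b).imp (fun hvb => ⟨v, ⟨hv.1, hvb⟩, rfl⟩) fun hbv => ⟨v, ⟨hbv, hv.2.le⟩, rfl⟩

theorem isCompact_image (h : IsPeriodicParam Γ T β) (a b : ℝ) : IsCompact (β '' Icc a b) :=
  isCompact_Icc.image h.continuous

theorem isCompact (h : IsPeriodicParam Γ T β) : IsCompact Γ :=
  h.image_Icc_eq (zero_add T).le ▸ h.isCompact_image 0 T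

theorem isPreconnected_image (h : IsPeriodicParam Γ T β) (a b : ℝ) :
    IsPreconnected (β '' Icc a b) :=
  isPreconnected_Icc.image _ h.continuous.continuousOn

theorem isSubarc_image (h : IsPeriodicParam Γ T β) (a b : ℝ) : IsSubarc Γ (β '' Icc a b) :=
  ⟨image_subset_iff.2 fun t _ => h.mem t, (h.isCompact_image a b).isClosed,
    h.isPreconnected_image a b⟩

theorem image_subset_or (h : IsPeriodicParam Γ T β) {J : Set ℂ} (hJΓ : J ⊆ Γ)
    (hJ : IsPreconnected J) {a b : ℝ} (ha : β a ∈ J) (hb : β b ∈ J) :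
    β '' Icc a b ⊆ J ∨ β '' Icc b (a + T) ⊆ J := by
  by_contra! hmiss
  simp only [image_subset_iff, not_subset, mem_preimage] at hmiss
  obtain ⟨⟨c, hc, hcJ⟩, d, hd, hdJ⟩ := hmiss
  have hac : a < c := hc.1.lt_of_ne fun hac => hcJ (hac ▸ ha)
  have hdT : d < a + T := hd.2.lt_of_ne fun hdT => hdJ (by rwa [hdT, h.periodic])
  -- `c` and `d` cut `Γ` into two closed arcs, one through `β b` and one through `β a`, and `J`
  -- avoids both of their common points
  obtain ⟨z, hz, ⟨u, hu, huz⟩, ⟨v, hv, hvz⟩⟩ := isPreconnected_closed_iff.1 hJ _ _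
    (h.isCompact_image c d).isClosed (h.isCompact_image d (c + T)).isClosed
    (hJΓ.trans (h.subset_image_Icc_union c d)) ⟨β b, hb, b, ⟨hc.2, hd.1⟩, rfl⟩
    ⟨β a, ha, a + T, ⟨hd.2, by linarith⟩, h.periodic a⟩
  rcases hv.2.lt_or_eq with hvT | rfl
  · have huv : u = v := h.injOn c ⟨hu.1, by linarith [hu.2]⟩
      ⟨(hc.2.trans hd.1).trans hv.1, hvT⟩ (huz.trans hvz.symm)
    obtain rfl : u = d := hu.2.antisymm (huv ▸ hv.1)
    exact hdJ (huz ▸ hz)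
  · exact hcJ (h.periodic c ▸ hvz ▸ hz)

theorem min_hausdorffMeasure_le (h : IsPeriodicParam Γ T β) (a b : ℝ) :
    min (μH[1] (β '' Icc a b)) (μH[1] (β '' Icc b (a + T))) ≤
      shorterArcLength Γ (β a) (β b) := by
  refine le_iInf₂ fun J ⟨⟨hJΓ, _, hJ⟩, ha, hb⟩ => min_le_iff.2 ?_
  exact (h.image_subset_or hJΓ hJ ha hb).imp measure_mono measure_mono

theorem image_Icc_add_int (h : IsPeriodicParam Γ T β) (a b : ℝ) (k : ℤ) :
    β '' Icc (a + k * T) (b + k * T) = β '' Icc a b := by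
  rw [← image_add_const_Icc, image_image]
  simp only [h.apply_add_int]

theorem hausdorffMeasure_image_add (h : IsPeriodicParam Γ T β) {a b c : ℝ} (hac : a ≤ c)
    (hcb : c ≤ b) (hba : b ≤ a + T) :
    μH[1] (β '' Icc a b) = μH[1] (β '' Icc a c) + μH[1] (β '' Icc c b) := by
  have hatoms := Measure.nullSingletonClass_hausdorff ℂ one_pos
  rw [← Icc_union_Icc_eq_Icc hac hcb, image_union]
  refine measure_union₀ (h.isCompact_image c b).measurableSet.nullMeasurableSet ?_
  refine measure_mono_null (t := {β a, β c}) ?_ ((Set.toFinite _).measure_zero _)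
  rintro z ⟨⟨u, hu, rfl⟩, ⟨v, hv, huv⟩⟩
  rcases (hv.2.trans hba).lt_or_eq with hvT | rfl
  · have hvu : v = u := h.injOn a ⟨hac.trans hv.1, hvT⟩
      ⟨hu.1, (hu.2.trans hv.1).trans_lt hvT⟩ huv
    exact Or.inr (congrArg β (hu.2.antisymm (hvu ▸ hv.1)))
  · exact Or.inl (huv ▸ h.periodic a)

theorem exists_pos_le_dist (h : IsPeriodicParam Γ T β) :
    ∃ D > 0, ∀ a, D ≤ dist (β (a + T / 3)) (β (a + 2 * T / 3)) := by
  have hT := h.pos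
  have hc := h.continuous
  obtain ⟨x₀, -, hx₀⟩ := (isCompact_Icc (a := (0 : ℝ)) (b := T)).exists_isMinOn
    (nonempty_Icc.2 hT.le) (f := fun a => dist (β (a + T / 3)) (β (a + 2 * T / 3)))
    (by fun_prop)
  refine ⟨dist (β (x₀ + T / 3)) (β (x₀ + 2 * T / 3)), dist_pos.2 fun heq => ?_, fun a => ?_⟩
  · linarith [h.injOn x₀ ⟨by linarith, by linarith⟩ ⟨by linarith, by linarith⟩ heq]
  · obtain ⟨k, hk⟩ := h.exists_int_mem_Ico 0 a
    have hmin := hx₀ ⟨hk.1, by linarith [hk.2]⟩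
    simpa only [mem_ofPred_eq, add_right_comm a (k * T), h.apply_add_int] using hmin

theorem exists_hausdorffMeasure_le (h : IsPeriodicParam Γ T β) {Λ : ℝ}
    (hq : IsQuasismooth Γ Λ) : ∃ η > 0, ∀ a b, a ≤ b → b ≤ a + η →
      μH[1] (β '' Icc a b) ≤ ENNReal.ofReal (Λ * dist (β a) (β b)) := by
  have hT := h.pos
  have hΛ : 0 < Λ := zero_lt_one.trans_le hq.1
  obtain ⟨D, hD, hDβ⟩ := h.exists_pos_le_dist
  obtain ⟨η, hη, hβη⟩ := Metric.uniformContinuous_iff.1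
    (uniformContinuous_of_periodic h.periodic hT h.continuous) (D / Λ) (by positivity)
  refine ⟨min (η / 2) (T / 3), by positivity, fun a b hab hb => ?_⟩
  have hbη : b ≤ a + η / 2 := hb.trans (by gcongr; exact min_le_left _ _)
  have hbT : b ≤ a + T / 3 := hb.trans (by gcongr; exact min_le_right _ _)
  refine (min_le_iff.1 ((h.min_hausdorffMeasure_le a b).trans
    (hq.2 _ (h.mem a) _ (h.mem b)))).resolve_right fun hlong => ?_
  have hDlong : ENNReal.ofReal D ≤ μH[1] (β '' Icc b (a + T)) :=
    (ENNReal.ofReal_le_ofReal (hDβ a)).trans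
      (ofReal_dist_le_hausdorffMeasure (h.isPreconnected_image _ _)
        (mem_image_of_mem β ⟨by linarith, by linarith⟩)
        (mem_image_of_mem β ⟨by linarith, by linarith⟩))
  have hDle : D ≤ Λ * dist (β a) (β b) :=
    (ENNReal.ofReal_le_ofReal_iff (by positivity)).1 (hDlong.trans hlong)
  have hclose : dist (β a) (β b) < D / Λ :=
    hβη (by rw [Real.dist_eq, abs_lt]; constructor <;> linarith)
  rw [lt_div_iff₀' hΛ] at hclose
  exact hDle.not_gt hclose

theorem hausdorffMeasure_lt_top (h : IsPeriodicParam Γ T β) {Λ : ℝ}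
    (hq : IsQuasismooth Γ Λ) : μH[1] Γ < ⊤ := by
  obtain ⟨η, hη, hle⟩ := h.exists_hausdorffMeasure_le hq
  have hfin : ∀ k : ℕ, μH[1] (β '' Icc 0 (k * η)) < ⊤ := by
    intro k
    induction k with
    | zero =>
      have := Measure.nullSingletonClass_hausdorff ℂ one_pos
      simp
    | succ k ih =>
      have hk : (k : ℝ) * η ≤ (k + 1 : ℕ) * η := by gcongr; simp
      rw [← Icc_union_Icc_eq_Icc (by positivity) hk, image_union]
      exact measure_union_lt_top ih ((hle _ _ hk (by push_cast; linarith)).trans_lt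
        ENNReal.ofReal_lt_top)
  obtain ⟨k, hk⟩ := exists_nat_ge (T / η)
  rw [div_le_iff₀ hη] at hk
  simpa only [h.image_Icc_eq (show 0 + T ≤ k * η by linarith)] using hfin k

end IsPeriodicParam

/-! ### Arc length -/

/-- The signed length of the curve between the parameters `0` and `t`, for a parametrization of
period `1`. -/
def arcLength (β : ℝ → ℂ) (t : ℝ) : ℝ :=
  ⌊t⌋ * μH[1].real (β '' Icc 0 1) + μH[1].real (β '' Icc 0 (Int.fract t))

theorem arcLength_add_int (β : ℝ → ℂ) (t : ℝ) (k : ℤ) :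
    arcLength β (t + k) = arcLength β t + k * μH[1].real (β '' Icc 0 1) := by
  simp only [arcLength, Int.floor_add_intCast, Int.fract_add_intCast]
  push_cast
  ring

theorem arcLength_add_one (β : ℝ → ℂ) (t : ℝ) :
    arcLength β (t + 1) = arcLength β t + μH[1].real (β '' Icc 0 1) := by
  simpa using arcLength_add_int β t 1

theorem arcLength_of_mem_Ico (β : ℝ → ℂ) {t : ℝ} (ht : t ∈ Ico (0 : ℝ) 1) :
    arcLength β t = μH[1].real (β '' Icc 0 t) := by
  simp [arcLength, Int.floor_eq_zero_iff.2 ht, Int.fract_eq_self.2 ht]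

namespace IsPeriodicParam

variable {Γ : Set ℂ} {T : ℝ} {β : ℝ → ℂ}

theorem hausdorffMeasure_image_ne_top (h : IsPeriodicParam Γ T β) (hΓ : μH[1] Γ < ⊤) (a b : ℝ) :
    μH[1] (β '' Icc a b) ≠ ⊤ :=
  ((measure_mono (h.isSubarc_image a b).1).trans_lt hΓ).ne

theorem hausdorffMeasure_real_image_add (h : IsPeriodicParam Γ T β) (hΓ : μH[1] Γ < ⊤)
    {a b c : ℝ} (hac : a ≤ c) (hcb : c ≤ b) (hba : b ≤ a + T) :
    μH[1].real (β '' Icc a b) = μH[1].real (β '' Icc a c) + μH[1].real (β '' Icc c b) := by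
  rw [Measure.real, h.hausdorffMeasure_image_add hac hcb hba, ENNReal.toReal_add
    (h.hausdorffMeasure_image_ne_top hΓ _ _) (h.hausdorffMeasure_image_ne_top hΓ _ _)]
  rfl

theorem arcLength_sub_of_mem_Ico (h : IsPeriodicParam Γ 1 β) (hΓ : μH[1] Γ < ⊤) {a b : ℝ}
    (ha : a ∈ Ico (0 : ℝ) 1) (hab : a ≤ b) (hba : b ≤ a + 1) :
    arcLength β b - arcLength β a = μH[1].real (β '' Icc a b) := by
  obtain ⟨ha0, ha1⟩ := ha
  rw [arcLength_of_mem_Ico β ⟨ha0, ha1⟩]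
  rcases lt_or_ge b 1 with hb | hb
  · rw [arcLength_of_mem_Ico β ⟨ha0.trans hab, hb⟩,
      h.hausdorffMeasure_real_image_add hΓ ha0 hab (by linarith)]
    ring
  · have hbsub : arcLength β b =
        μH[1].real (β '' Icc 0 (b - 1)) + μH[1].real (β '' Icc 0 1) := by
      rw [← arcLength_of_mem_Ico β ⟨by linarith, by linarith⟩, ← arcLength_add_one, sub_add_cancel]
    have hshift : β '' Icc 1 b = β '' Icc 0 (b - 1) := by
      simpa using h.image_Icc_add_int 0 (b - 1) 1
    rw [hbsub, ← hshift, h.hausdorffMeasure_real_image_add hΓ ha0 ha1.le (by linarith),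
      h.hausdorffMeasure_real_image_add hΓ ha1.le hb hba]
    ring

theorem arcLength_sub (h : IsPeriodicParam Γ 1 β) (hΓ : μH[1] Γ < ⊤) {a b : ℝ} (hab : a ≤ b)
    (hba : b ≤ a + 1) : arcLength β b - arcLength β a = μH[1].real (β '' Icc a b) := by
  obtain ⟨k, hk⟩ := h.exists_int_mem_Ico 0 a
  have hshift := h.image_Icc_add_int a b k
  simp only [mul_one, zero_add] at hk hshift
  have hsub := h.arcLength_sub_of_mem_Ico hΓ (b := b + k) hk (by linarith) (by linarith)
  rwa [arcLength_add_int, arcLength_add_int, hshift, add_sub_add_right_eq_sub] at hsub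

theorem hausdorffMeasure_image_eq (h : IsPeriodicParam Γ 1 β) (hΓ : μH[1] Γ < ⊤) {a b : ℝ}
    (hab : a ≤ b) (hba : b ≤ a + 1) :
    μH[1] (β '' Icc a b) = ENNReal.ofReal (arcLength β b - arcLength β a) := by
  rw [h.arcLength_sub hΓ hab hba, ofReal_measureReal (h.hausdorffMeasure_image_ne_top hΓ a b)]

theorem continuous_arcLength (h : IsPeriodicParam Γ 1 β) {Λ : ℝ} (hq : IsQuasismooth Γ Λ) :
    Continuous (arcLength β) := by
  have hΓ := h.hausdorffMeasure_lt_top hq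
  have hβ := h.continuous
  obtain ⟨η, hη, hle⟩ := h.exists_hausdorffMeasure_le hq
  have hΛ : 0 < Λ := zero_lt_one.trans_le hq.1
  have hlip : ∀ a b, a ≤ b → b ≤ a + min η 1 →
      dist (arcLength β b) (arcLength β a) ≤ Λ * dist (β b) (β a) := by
    intro a b hab hb
    rw [Real.dist_eq, h.arcLength_sub hΓ hab (hb.trans (by gcongr; exact min_le_right _ _)),
      abs_of_nonneg measureReal_nonneg, dist_comm]
    exact ENNReal.toReal_le_of_le_ofReal (by positivity)
      (hle a b hab (hb.trans (by gcongr; exact min_le_left _ _)))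
  refine continuous_iff_continuousAt.2 fun t => tendsto_iff_dist_tendsto_zero.2 ?_
  have hzero : Tendsto (fun u => Λ * dist (β u) (β t)) (𝓝 t) (𝓝 0) := by
    have hcont : Continuous fun u => Λ * dist (β u) (β t) := by fun_prop
    simpa using hcont.tendsto t
  refine squeeze_zero' (.of_forall fun _ => dist_nonneg) ?_ hzero
  filter_upwards [ball_mem_nhds t (show 0 < min η 1 by positivity)] with u hu
  rw [mem_ball, Real.dist_eq, abs_lt] at hu
  rcases le_total u t with hut | htu
  · rw [dist_comm, dist_comm (β u)]
    exact hlip u t hut (by linarith)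
  · exact hlip t u htu (by linarith)

theorem strictMono_arcLength (h : IsPeriodicParam Γ 1 β) (hΓ : μH[1] Γ < ⊤) :
    StrictMono (arcLength β) := by
  have hlt : ∀ a b, a < b → b < a + 1 → arcLength β a < arcLength β b := by
    intro a b hab hba
    have hne : β a ≠ β b := fun heq =>
      hab.ne (h.injOn a ⟨le_rfl, by linarith⟩ ⟨hab.le, hba⟩ heq)
    have hdist := ofReal_dist_le_hausdorffMeasure (h.isPreconnected_image a b)
      (mem_image_of_mem β (left_mem_Icc.2 hab.le)) (mem_image_of_mem β (right_mem_Icc.2 hab.le))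
    rw [h.hausdorffMeasure_image_eq hΓ hab.le hba.le] at hdist
    exact sub_pos.1 (ENNReal.ofReal_pos.1
      ((ENNReal.ofReal_pos.2 (dist_pos.2 hne)).trans_le hdist))
  let F : AddConstMap ℝ ℝ 1 (μH[1].real (β '' Icc 0 1)) := ⟨arcLength β, arcLength_add_one β⟩
  refine (AddConstMapClass.strictMono_iff_Icc (f := F) one_pos 0).2 fun a ha b hb hab => ?_
  rcases lt_or_ge b (a + 1) with hba | _
  · exact hlt a b hab hba
  · have hmid : a < (a + b) / 2 ∧ (a + b) / 2 < b := ⟨by linarith, by linarith⟩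
    exact (hlt a _ hmid.1 (by linarith [ha.1, hb.2])).trans
      (hlt _ b hmid.2 (by linarith [ha.1, hb.2]))

theorem length_pos (h : IsPeriodicParam Γ 1 β) (hΓ : μH[1] Γ < ⊤) :
    0 < μH[1].real (β '' Icc 0 1) := by
  have hlt := h.strictMono_arcLength hΓ (lt_add_one 0)
  rwa [arcLength_add_one, lt_add_iff_pos_right] at hlt

theorem surjective_arcLength (h : IsPeriodicParam Γ 1 β) {Λ : ℝ} (hq : IsQuasismooth Γ Λ) :
    Function.Surjective (arcLength β) := by
  intro s
  have hL := h.length_pos (h.hausdorffMeasure_lt_top hq)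
  set L := μH[1].real (β '' Icc 0 1)
  set q := (s - arcLength β 0) / L
  have hq : q * L = s - arcLength β 0 := div_mul_cancel₀ _ hL.ne'
  refine mem_range_of_exists_le_of_exists_ge (h.continuous_arcLength ‹_›)
    ⟨0 + ⌊q⌋, ?_⟩ ⟨0 + ⌈q⌉, ?_⟩ <;> rw [arcLength_add_int]
  · linarith [mul_le_mul_of_nonneg_right (Int.floor_le q) hL.le]
  · linarith [mul_le_mul_of_nonneg_right (Int.le_ceil q) hL.le]

theorem exists_abs_arcLength_sub_le (h : IsPeriodicParam Γ 1 β) {Λ : ℝ} (hq : IsQuasismooth Γ Λ)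
    (t : ℝ) {ζ : ℂ} (hζ : ζ ∈ Γ) :
    ∃ v, β v = ζ ∧ |arcLength β t - arcLength β v| ≤ Λ * dist (β t) ζ := by
  have hΓ := h.hausdorffMeasure_lt_top hq
  have hmono := (h.strictMono_arcLength hΓ).monotone
  obtain ⟨v, hv, rfl⟩ := h.exists_mem_Ico t hζ
  have hΛ : 0 ≤ Λ * dist (β t) (β v) := mul_nonneg (zero_le_one.trans hq.1) dist_nonneg
  have hmin := (h.min_hausdorffMeasure_le t v).trans (hq.2 _ (h.mem t) _ (h.mem v))
  rw [h.hausdorffMeasure_image_eq hΓ hv.1 hv.2.le,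
    h.hausdorffMeasure_image_eq hΓ hv.2.le (by linarith [hv.1]), min_le_iff,
    ENNReal.ofReal_le_ofReal_iff hΛ, ENNReal.ofReal_le_ofReal_iff hΛ] at hmin
  rcases hmin with hshort | hshort
  · exact ⟨v, rfl, by rwa [abs_sub_comm, abs_of_nonneg (sub_nonneg.2 (hmono hv.1))]⟩
  · have hback : arcLength β (v - 1) = arcLength β v - μH[1].real (β '' Icc 0 1) := by
      rw [eq_sub_iff_add_eq, ← arcLength_add_one, sub_add_cancel]
    have hle := hmono hv.2.le
    rw [arcLength_add_one] at hshort hle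
    refine ⟨v - 1, h.periodic.sub_eq v, ?_⟩
    rw [hback, abs_of_nonneg (by linarith)]
    linarith

end IsPeriodicParam

/-- `γ` is a parametrization by arc length, of period `L`, of the quasismooth curve `Γ`: up to the
factor `Λ`, distances along the curve are Euclidean distances. -/
structure IsArcLengthParam (Γ : Set ℂ) (Λ L : ℝ) (γ : ℝ → ℂ) : Prop
    extends IsPeriodicParam Γ L γ where
  length_eq : ∀ a b, a ≤ b → b ≤ a + L → μH[1] (γ '' Icc a b) = ENNReal.ofReal (b - a)
  exists_abs_sub_le : ∀ t, ∀ ζ ∈ Γ, ∃ t', γ t' = ζ ∧ |t - t'| ≤ Λ * dist (γ t) ζ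

theorem IsJordanCurve.exists_isArcLengthParam {Γ : Set ℂ} {Λ : ℝ} (hJ : IsJordanCurve Γ)
    (hq : IsQuasismooth Γ Λ) : ∃ L γ, IsArcLengthParam Γ Λ L γ := by
  obtain ⟨β, h⟩ := hJ.exists_isPeriodicParam
  have hΓ := h.hausdorffMeasure_lt_top hq
  let e := (h.strictMono_arcLength hΓ).orderIsoOfSurjective _ (h.surjective_arcLength hq)
  have he (t : ℝ) : e.symm (arcLength β t) = t := e.symm_apply_apply t
  have he' (t : ℝ) : arcLength β (e.symm t) = t := e.apply_symm_apply t
  set L := μH[1].real (β '' Icc 0 1)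
  have heL (t : ℝ) (k : ℤ) : e.symm (t + k * L) = e.symm t + k := by
    rw [← he (e.symm t + k), arcLength_add_int, he']
  refine ⟨L, β ∘ e.symm, ⟨h.length_pos hΓ, h.continuous.comp e.symm.continuous, ?_,
    fun u v => ?_⟩, fun a b hab hb => ?_, fun t ζ hζ => ?_⟩
  · rw [e.symm.surjective.range_comp, h.range_eq]
  · simp only [Function.comp_apply, h.eq_iff, mul_one, ← heL, e.symm.injective.eq_iff]
  · have hbe : e.symm b ≤ e.symm a + 1 := by
      have hmono := e.symm.monotone (show b ≤ a + (1 : ℤ) * L by rwa [Int.cast_one, one_mul])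
      rwa [heL, Int.cast_one] at hmono
    rw [image_comp, OrderIso.image_Icc, h.hausdorffMeasure_image_eq hΓ (e.symm.monotone hab) hbe,
      he', he']
  · obtain ⟨v, rfl, hv⟩ := h.exists_abs_arcLength_sub_le hq (e.symm t) hζ
    rw [he'] at hv
    exact ⟨arcLength β v, by rw [Function.comp_apply, he], hv⟩

namespace IsArcLengthParam

variable {Γ : Set ℂ} {Λ L : ℝ} {γ : ℝ → ℂ}

theorem hausdorffMeasure_eq (h : IsArcLengthParam Γ Λ L γ) : μH[1] Γ = ENNReal.ofReal L := by
  simpa [h.image_Icc_eq] using h.length_eq 0 (0 + L) (by linarith [h.pos]) le_rfl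

theorem hausdorffMeasure_image (h : IsArcLengthParam Γ Λ L γ) {a b : ℝ} (hab : a ≤ b) :
    μH[1] (γ '' Icc a b) = ENNReal.ofReal (min (b - a) L) := by
  rcases le_total (b - a) L with hL | hL
  · rw [min_eq_left hL, h.length_eq a b hab (by linarith)]
  · rw [min_eq_right hL, h.image_Icc_eq (by linarith), h.hausdorffMeasure_eq]

theorem hausdorffMeasure_image_le (h : IsArcLengthParam Γ Λ L γ) {a b : ℝ} (hab : a ≤ b) :
    μH[1] (γ '' Icc a b) ≤ ENNReal.ofReal (b - a) := by
  rw [h.hausdorffMeasure_image hab]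
  exact ENNReal.ofReal_le_ofReal (min_le_left _ _)

theorem dist_le_of_mem_image (h : IsArcLengthParam Γ Λ L γ) {a b : ℝ} (hab : a ≤ b) {x y : ℂ}
    (hx : x ∈ γ '' Icc a b) (hy : y ∈ γ '' Icc a b) : dist x y ≤ b - a :=
  (ENNReal.ofReal_le_ofReal_iff (by linarith)).1
    ((ofReal_dist_le_hausdorffMeasure (h.isPreconnected_image a b) hx hy).trans
      (h.hausdorffMeasure_image_le hab))

theorem diam_le (h : IsArcLengthParam Γ Λ L γ) : diam Γ ≤ L := by
  refine diam_le_of_forall_dist_le h.pos.le fun x hx y hy => ?_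
  rw [← h.image_Icc_eq (zero_add L).le] at hx hy
  simpa using h.dist_le_of_mem_image h.pos.le hx hy

theorem mem_image_of_dist_le (h : IsArcLengthParam Γ Λ L γ) (hΛ : 0 ≤ Λ) {t r : ℝ} {ζ : ℂ}
    (hζ : ζ ∈ Γ) (hr : dist (γ t) ζ ≤ r) : ζ ∈ γ '' Icc (t - Λ * r) (t + Λ * r) := by
  obtain ⟨t', rfl, ht'⟩ := h.exists_abs_sub_le t ζ hζ
  have habs := abs_le.1 (ht'.trans (mul_le_mul_of_nonneg_left hr hΛ))
  exact ⟨t', ⟨by linarith, by linarith⟩, rfl⟩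

theorem hausdorffMeasure_inter_ball_le (h : IsArcLengthParam Γ Λ L γ) (hΛ : 0 ≤ Λ) (z : ℂ)
    {r : ℝ} (hr : 0 < r) : μH[1] (Γ ∩ ball z r) ≤ ENNReal.ofReal (4 * Λ * r) := by
  rcases (Γ ∩ ball z r).eq_empty_or_nonempty with hempty | ⟨ζ, hζ, hζr⟩
  · simp [hempty]
  · obtain ⟨t, rfl⟩ := h.range_eq.symm ▸ hζ
    have hsub : Γ ∩ ball z r ⊆ γ '' Icc (t - Λ * (2 * r)) (t + Λ * (2 * r)) := by
      rintro ξ ⟨hξ, hξr⟩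
      refine h.mem_image_of_dist_le hΛ hξ ?_
      linarith [dist_triangle_right (γ t) ξ z, mem_ball.1 hξr, mem_ball.1 hζr]
    calc μH[1] (Γ ∩ ball z r) ≤ _ := measure_mono hsub
      _ ≤ _ := h.hausdorffMeasure_image_le (by nlinarith)
      _ = ENNReal.ofReal (4 * Λ * r) := by ring_nf

theorem hasLinearGrowth_restrict (h : IsArcLengthParam Γ Λ L γ) (hΛ : 0 ≤ Λ) {S : Set ℂ}
    (hS : S ⊆ Γ) : HasLinearGrowth (μH[1].restrict S) (4 * Λ).toNNReal := by
  intro z r hr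
  rw [Measure.restrict_apply measurableSet_ball, inter_comm, ENNReal.ofNNReal_toNNReal,
    ← ENNReal.ofReal_mul (by positivity)]
  exact (measure_mono (inter_subset_inter_left _ hS)).trans
    (h.hausdorffMeasure_inter_ball_le hΛ z hr)

theorem measurableSet_image_Ico (h : IsArcLengthParam Γ Λ L γ) {a b : ℝ} (hab : b ≤ a + L) :
    MeasurableSet (γ '' Ico a b) :=
  measurableSet_Ico.image_of_continuousOn_injOn h.continuous.continuousOn
    ((h.injOn a).mono (Ico_subset_Ico_right hab))

theorem measure_image_two_mul_le (h : IsArcLengthParam Γ Λ L γ) {ν : Measure ℂ} {lam : ℝ}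
    (hν : IsAInftyMeasure Γ ν lam) (t : ℝ) {r : ℝ} (hr : 0 ≤ r) :
    ν (γ '' Icc (t - 2 * r) (t + 2 * r)) ≤
      ENNReal.ofReal lam * ν (γ '' Icc (t - r) (t + r)) := by
  refine hν.2 _ _ (h.isSubarc_image _ _) (by gcongr <;> linarith)
    (h.isCompact_image _ _).measurableSet ?_
  rw [h.hausdorffMeasure_image (by linarith), h.hausdorffMeasure_image (by linarith),
    ← ENNReal.ofReal_ofNat 2, ← ENNReal.ofReal_mul zero_le_two, mul_min_of_nonneg _ _ zero_le_two]
  exact ENNReal.ofReal_le_ofReal (min_le_min (by linarith) (by linarith [h.pos]))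

theorem measure_image_two_pow_mul_le (h : IsArcLengthParam Γ Λ L γ) {ν : Measure ℂ} {lam : ℝ}
    (hν : IsAInftyMeasure Γ ν lam) (t : ℝ) {r : ℝ} (hr : 0 ≤ r) (i : ℕ) :
    ν (γ '' Icc (t - 2 ^ i * r) (t + 2 ^ i * r)) ≤
      ENNReal.ofReal lam ^ i * ν (γ '' Icc (t - r) (t + r)) := by
  induction i with
  | zero => simp
  | succ i ih =>
    simp only [pow_succ', mul_assoc]
    exact (h.measure_image_two_mul_le hν t (by positivity)).trans (by gcongr)

end IsArcLengthParam

/-! ### A Remez inequality on arcs -/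

section PotentialRemez

variable {f : ℂ → ℂ} {μ : Measure ℂ} [IsFiniteMeasure μ] {C : ℝ≥0} {S : Set ℂ} {r : ℝ} {ζ₀ : ℂ}

theorem norm_le_of_norm_mul_exp_le (hμ : HasLinearGrowth μ C) (hS : IsCompact S)
    (hSμ : ∀ᵐ w ∂μ, w ∈ S) (hr : 0 < r) (hζ₀ : ∀ w ∈ S, dist w ζ₀ ≤ r)
    (hf : DifferentiableOn ℂ f (ball ζ₀ (4 * r))) {a M : ℝ} (ha : 0 ≤ a)
    (hSM : ∀ z ∈ S, ‖f z‖ * Real.exp (2 * C * a) ≤ M)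
    (hM : ∀ z ∈ ball ζ₀ (4 * r),
      ‖f z‖ * Real.exp (-(a * Real.log 2 * μ.real univ / r)) ≤ M) :
    ‖f ζ₀‖ ≤ M := by
  by_cases hζ₀S : ζ₀ ∈ S
  · exact (le_mul_of_one_le_right (norm_nonneg _) (Real.one_le_exp (by positivity))).trans
      (hSM ζ₀ hζ₀S)
  have hU : IsOpen (ball ζ₀ (4 * r) \ S) := isOpen_ball.sdiff hS.isClosed
  have hfz : ∀ z ∈ ball ζ₀ (4 * r), AnalyticAt ℂ f z := fun z hz =>
    hf.analyticAt (isOpen_ball.mem_nhds hz)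
  refine (le_mul_of_one_le_right (norm_nonneg _)
    (one_le_potWeight hμ hS.isBounded hSμ hr ha hζ₀)).trans
    (le_of_isAnalyticModulusAt hU (h := fun z => ‖f z‖ * potWeight μ r a z)
      (fun z hz => (isAnalyticModulusAt_norm (hfz z hz.1)).mul
        (isAnalyticModulusAt_potWeight hμ hS hSμ hr a hz.2)) ?_ ?_
      ⟨mem_ball_self (by positivity), hζ₀S⟩)
  · intro ζ hζ M' hM'
    by_cases hζS : ζ ∈ S
    · have hζball : ζ ∈ ball ζ₀ (4 * r) := mem_ball.2 (by linarith [hζ₀ ζ hζS])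
      have hcont : ContinuousAt (fun z => ‖f z‖ * Real.exp (2 * C * a)) ζ :=
        (hfz ζ hζball).continuousAt.norm.mul continuousAt_const
      filter_upwards [nhdsWithin_le_nhds
        (hcont.eventually (gt_mem_nhds ((hSM ζ hζS).trans_lt hM')))] with z hz
      refine lt_of_le_of_lt ?_ hz
      gcongr
      exact potWeight_le_exp hμ hS.isBounded hSμ hr ha z
    · have hfar : 3 * r < dist ζ ζ₀ := by
        by_contra! hnear
        exact (hU.frontier_eq ▸ hζ).2 ⟨mem_ball.2 (by linarith), hζS⟩
      have hfar' : ∀ᶠ z in 𝓝 ζ, 3 * r < dist z ζ₀ :=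
        (continuous_id.dist continuous_const).continuousAt.eventually (lt_mem_nhds hfar)
      filter_upwards [nhdsWithin_le_nhds hfar', self_mem_nhdsWithin] with z hz hzU
      refine lt_of_le_of_lt ?_ ((hM z hzU.1).trans_lt hM')
      gcongr
      refine potWeight_le_exp_of_two_mul_le_dist hμ hS.isBounded hSμ hr ha z fun w hw => ?_
      linarith [dist_triangle z w ζ₀, hζ₀ w hw]
  · intro M' _
    filter_upwards [mem_inf_of_left
      ((tendsto_dist_right_cobounded_atTop ζ₀).eventually_gt_atTop (4 * r)),
      mem_inf_of_right (mem_principal_self _)] with z hz hzU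
    exact absurd (mem_ball.1 hzU.1) hz.not_gt

theorem measureReal_univ_le_of_norm_le (hμ : HasLinearGrowth μ C) (hS : IsCompact S)
    (hSμ : ∀ᵐ w ∂μ, w ∈ S) (hr : 0 < r) (hζ₀ : ∀ w ∈ S, dist w ζ₀ ≤ r)
    (hf : DifferentiableOn ℂ f (ball ζ₀ (4 * r))) (hf0 : f ζ₀ ≠ 0) {N : ℝ} (hN : 0 ≤ N)
    (hup : ∀ z ∈ ball ζ₀ (4 * r), ‖f z‖ ≤ Real.exp N * ‖f ζ₀‖)
    (hsmall : ∀ z ∈ S, ‖f z‖ ≤ Real.exp (-(16 * C * (N + 1) + 1)) * ‖f ζ₀‖) :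
    μ.real univ ≤ r / 4 := by
  by_contra! hlt
  have hfpos : 0 < ‖f ζ₀‖ := norm_pos_iff.2 hf0
  have hdecay : N + 1 ≤ 8 * (N + 1) * Real.log 2 * μ.real univ / r := by
    have hlog := Real.log_two_gt_d9
    calc N + 1 = 8 * (N + 1) * (1 / 2) * (r / 4) / r := by field_simp; norm_num
      _ ≤ 8 * (N + 1) * Real.log 2 * μ.real univ / r := by gcongr; linarith
  have hle : ‖f ζ₀‖ ≤ Real.exp (-1) * ‖f ζ₀‖ := by
    refine norm_le_of_norm_mul_exp_le hμ hS hSμ hr hζ₀ hf (a := 8 * (N + 1)) (by positivity)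
      (fun z hz => ?_) fun z hz => ?_
    · calc ‖f z‖ * Real.exp (2 * C * (8 * (N + 1)))
          ≤ Real.exp (-(16 * C * (N + 1) + 1)) * ‖f ζ₀‖ *
              Real.exp (2 * C * (8 * (N + 1))) := by gcongr; exact hsmall z hz
        _ = Real.exp (-1) * ‖f ζ₀‖ := by
            rw [mul_right_comm, ← Real.exp_add]
            ring_nf
    · calc ‖f z‖ * Real.exp (-(8 * (N + 1) * Real.log 2 * μ.real univ / r))
          ≤ Real.exp N * ‖f ζ₀‖ * Real.exp (-(N + 1)) := by gcongr; exact hup z hz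
        _ = Real.exp (-1) * ‖f ζ₀‖ := by
            rw [mul_right_comm, ← Real.exp_add]
            ring_nf
  exact hle.not_gt (mul_lt_of_lt_one_left hfpos (Real.exp_lt_one_iff.2 neg_one_lt_zero))

end PotentialRemez

/-- `ζ` is a growth point of `f` on `Γ` at scale `ℓ` with exponent `A`: relative to its value at
`ζ`, the function `f` grows on `Γ` at most like a power `A` of the distance to `ζ`. -/
def IsGrowthPoint (Γ : Set ℂ) (f : ℂ → ℝ) (ℓ A : ℝ) (ζ : ℂ) : Prop :=
  ∀ ξ ∈ Γ, f ξ ≤ f ζ * (1 + dist ξ ζ / ℓ) ^ A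

theorem setLIntegral_const_rpow_le {X : Type*} [MeasurableSpace X] (ν : Measure X) {f : X → ℝ}
    {x p T : ℝ} (hx : 0 ≤ x) (hp : 0 ≤ p) {S : Set X} (hS : MeasurableSet S)
    (hxf : ∀ z ∈ S, Real.exp (-T) * x ≤ f z) :
    ENNReal.ofReal (x ^ p) * ν S ≤
      ENNReal.ofReal (Real.exp (p * T)) * ∫⁻ z in S, ENNReal.ofReal (f z ^ p) ∂ν := by
  rw [← setLIntegral_const, ← lintegral_const_mul' _ _ ENNReal.ofReal_ne_top]
  refine setLIntegral_mono' hS fun z hz => ?_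
  rw [← ENNReal.ofReal_mul (Real.exp_pos _).le]
  refine ENNReal.ofReal_le_ofReal ?_
  have hfz : 0 ≤ f z := (by positivity : 0 ≤ Real.exp (-T) * x).trans (hxf z hz)
  calc x ^ p ≤ (Real.exp T * f z) ^ p := by
        gcongr
        rw [← inv_mul_le_iff₀ (Real.exp_pos T), ← Real.exp_neg]
        exact hxf z hz
    _ = Real.exp (p * T) * f z ^ p := by
        rw [Real.mul_rpow (Real.exp_pos _).le hfz, ← Real.exp_mul, mul_comm T]

namespace IsArcLengthParam

variable {Γ : Set ℂ} {Λ L : ℝ} {γ : ℝ → ℂ}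

theorem norm_eval_le_mul_greenExp_pow (h : IsArcLengthParam Γ Λ L γ) (hΛ : 0 ≤ Λ) {Φ : ℂ → ℂ}
    (hΦ : IsExtConformal (unboundedComponent Γ) Φ) {n : ℕ} {P : Polynomial ℂ}
    (hP : P.natDegree ≤ n) {a ℓ : ℝ} (hℓ : 0 < ℓ) (hℓL : ℓ ≤ L) {A : ℝ} (hA : 0 < A) {ζ₀ : ℂ}
    (hζ₀ : ζ₀ ∈ γ '' Icc a (a + ℓ))
    (hgrowth : IsGrowthPoint Γ (fun z => ‖P.eval z‖) ℓ A ζ₀) (z : ℂ) :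
    ‖P.eval z‖ ≤ ‖P.eval ζ₀‖ * Real.exp (A * (Real.log 3 + 8 * Λ)) *
      (1 + dist z ζ₀ / ℓ) ^ A * greenExp (unboundedComponent Γ) Φ z ^ n := by
  set J := γ '' Icc a (a + ℓ)
  have hJΓ : J ⊆ Γ := (h.isSubarc_image _ _).1
  have hJc : IsCompact J := h.isCompact_image _ _
  have hJℓ : μH[1] J = ENNReal.ofReal ℓ := by
    rw [h.hausdorffMeasure_image (by linarith), add_sub_cancel_left, min_eq_left hℓL]
  have hfin : IsFiniteMeasure ((μH[1] : Measure ℂ).restrict J) :=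
    ⟨by rw [Measure.restrict_apply_univ, hJℓ]; exact ENNReal.ofReal_lt_top⟩
  by_cases hzΓ : z ∈ Γ
  · calc ‖P.eval z‖ ≤ ‖P.eval ζ₀‖ * 1 * (1 + dist z ζ₀ / ℓ) ^ A * 1 := by
          simpa only [mul_one] using hgrowth z hzΓ
      _ ≤ _ := by
          gcongr
          · exact Real.one_le_exp (by positivity)
          · exact one_le_pow₀ (one_le_greenExp hΦ z)
  · refine (norm_eval_le_of_le_mul_rpow h.isCompact hΦ hP (h.hasLinearGrowth_restrict hΛ hJΓ)
      hJc hJΓ (ae_restrict_mem hJc.measurableSet) hℓ ?_ ?_ hA (norm_nonneg _)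
      hgrowth hzΓ).trans_eq ?_
    · rw [Measure.real, Measure.restrict_apply_univ, hJℓ, ENNReal.toReal_ofReal hℓ.le]
    · exact fun w hw => by simpa using h.dist_le_of_mem_image (by linarith) hw hζ₀
    · rw [Real.coe_toNNReal _ (by positivity)]
      ring_nf

theorem norm_eval_le_exp_mul (h : IsArcLengthParam Γ Λ L γ) (hΛ : 0 ≤ Λ) {Φ : ℂ → ℂ}
    (hΦ : IsExtConformal (unboundedComponent Γ) Φ) {s δ : ℝ} (hs : 0 < s) (hδ : 0 < δ)
    (hsΓ : ∀ ζ ∈ Γ, ∀ y ∈ levelCurve (unboundedComponent Γ) Φ δ, s ≤ dist y ζ) {n : ℕ}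
    {P : Polynomial ℂ} (hP : P.natDegree ≤ n) {a ℓ : ℝ} (hℓ : 0 < ℓ) (hℓs : ℓ ≤ 8 * s)
    (hℓL : ℓ ≤ L) {A : ℝ} (hA : 0 < A) {ζ₀ : ℂ} (hζ₀ : ζ₀ ∈ γ '' Icc a (a + ℓ))
    (hgrowth : IsGrowthPoint Γ (fun z => ‖P.eval z‖) ℓ A ζ₀) {z : ℂ}
    (hz : dist z ζ₀ ≤ 4 * ℓ) :
    ‖P.eval z‖ ≤ Real.exp (A * (4 + Real.log 3 + 8 * Λ) + 128 * δ * n) * ‖P.eval ζ₀‖ := by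
  have hζ₀Γ : ζ₀ ∈ Γ := (h.isSubarc_image _ _).1 hζ₀
  have hdist : (1 + dist z ζ₀ / ℓ) ^ A ≤ Real.exp (A * 4) := by
    rw [mul_comm, Real.exp_mul]
    gcongr
    have : dist z ζ₀ / ℓ ≤ 4 := (div_le_iff₀ hℓ).2 hz
    linarith [Real.add_one_le_exp 4]
  have hgreen : greenExp (unboundedComponent Γ) Φ z ≤ Real.exp (128 * δ) := by
    refine (greenExp_le_exp h.isCompact ⟨ζ₀, hζ₀Γ⟩ hΦ hs hδ (K := 32) (by norm_num) hsΓ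
      ((infDist_le_dist_of_mem hζ₀Γ).trans (by linarith))).trans_eq ?_
    ring_nf
  have hgreen1 := one_le_greenExp hΦ z
  calc ‖P.eval z‖ ≤ ‖P.eval ζ₀‖ * Real.exp (A * (Real.log 3 + 8 * Λ)) *
        (1 + dist z ζ₀ / ℓ) ^ A * greenExp (unboundedComponent Γ) Φ z ^ n :=
        h.norm_eval_le_mul_greenExp_pow hΛ hΦ hP hℓ hℓL hA hζ₀ hgrowth z
    _ ≤ ‖P.eval ζ₀‖ * Real.exp (A * (Real.log 3 + 8 * Λ)) * Real.exp (A * 4) *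
          Real.exp (128 * δ) ^ n := by gcongr
    _ = Real.exp (A * (4 + Real.log 3 + 8 * Λ) + 128 * δ * n) * ‖P.eval ζ₀‖ := by
        rw [← Real.exp_nat_mul, mul_assoc, mul_assoc, ← Real.exp_add, ← Real.exp_add, mul_comm]
        ring_nf

theorem hausdorffMeasure_sep_le (h : IsArcLengthParam Γ Λ L γ) (hΛ : 0 ≤ Λ) {f : ℂ → ℂ}
    (hf : Differentiable ℂ f) {a ℓ : ℝ} (hℓ : 0 < ℓ) {ζ₀ : ℂ}
    (hζ₀ : ζ₀ ∈ γ '' Icc a (a + ℓ)) (hf0 : f ζ₀ ≠ 0) {N : ℝ} (hN : 0 ≤ N)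
    (hup : ∀ z, dist z ζ₀ ≤ 4 * ℓ → ‖f z‖ ≤ Real.exp N * ‖f ζ₀‖) :
    μH[1] {z ∈ γ '' Icc a (a + ℓ) | ‖f z‖ ≤ Real.exp (-(64 * Λ * (N + 1) + 1)) * ‖f ζ₀‖} ≤
      ENNReal.ofReal (ℓ / 4) := by
  set S := {z ∈ γ '' Icc a (a + ℓ) | ‖f z‖ ≤ Real.exp (-(64 * Λ * (N + 1) + 1)) * ‖f ζ₀‖}
  have hS : IsCompact S := (h.isCompact_image _ _).inter_right
    (isClosed_le hf.continuous.norm continuous_const)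
  have hSfin : μH[1] S < ⊤ := (measure_mono (sep_subset _ _)).trans_lt
    ((h.hausdorffMeasure_image_le (by linarith)).trans_lt ENNReal.ofReal_lt_top)
  have hfin : IsFiniteMeasure ((μH[1] : Measure ℂ).restrict S) :=
    ⟨by rwa [Measure.restrict_apply_univ]⟩
  have hreal := measureReal_univ_le_of_norm_le (f := f)
    (h.hasLinearGrowth_restrict hΛ ((sep_subset _ _).trans (h.isSubarc_image _ _).1)) hS
    (ae_restrict_mem hS.measurableSet) hℓ
    (fun w hw => by simpa using h.dist_le_of_mem_image (by linarith) hw.1 hζ₀)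
    hf.differentiableOn hf0 hN (fun z hz => hup z (mem_ball.1 hz).le) fun z hz => ?_
  · rw [Measure.real, Measure.restrict_apply_univ] at hreal
    exact (ENNReal.le_ofReal_iff_toReal_le hSfin.ne (by positivity)).2 hreal
  · refine hz.2.trans_eq ?_
    rw [Real.coe_toNNReal _ (by positivity)]
    ring_nf

theorem measure_image_Icc_le_diff (h : IsArcLengthParam Γ Λ L γ) {ν : Measure ℂ} {lam : ℝ}
    (hν : IsAInftyMeasure Γ ν lam) {a ℓ : ℝ} (hℓ : 0 ≤ ℓ) (hℓL : ℓ ≤ L) {X : Set ℂ}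
    (hX : MeasurableSet X) (hXℓ : 2 * μH[1] X ≤ ENNReal.ofReal ℓ) :
    ν (γ '' Icc a (a + ℓ)) ≤ ENNReal.ofReal lam * ν (γ '' Ico a (a + ℓ) \ X) := by
  set J := γ '' Icc a (a + ℓ)
  set I := γ '' Ico a (a + ℓ)
  have hJℓ : μH[1] J = ENNReal.ofReal ℓ := by
    rw [h.hausdorffMeasure_image (by linarith), add_sub_cancel_left, min_eq_left hℓL]
  have hcover : J ⊆ (I \ X ∪ X) ∪ {γ (a + ℓ)} := by
    rintro _ ⟨t, ht, rfl⟩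
    rcases ht.2.lt_or_eq with htlt | rfl
    · by_cases htX : γ t ∈ X
      · exact Or.inl (Or.inr htX)
      · exact Or.inl (Or.inl ⟨⟨t, ⟨ht.1, htlt⟩, rfl⟩, htX⟩)
    · exact Or.inr rfl
  have := Measure.nullSingletonClass_hausdorff ℂ one_pos
  have hJle : μH[1] J ≤ μH[1] (I \ X) + μH[1] X := by
    refine (measure_mono hcover).trans ((measure_union_le _ _).trans ?_)
    rw [measure_singleton, add_zero]
    exact measure_union_le _ _
  refine hν.2 J (I \ X) (h.isSubarc_image _ _)
    (sdiff_subset.trans (image_mono Ico_subset_Icc_self))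
    ((h.measurableSet_image_Ico (by linarith)).diff hX) ?_
  refine (ENNReal.add_le_add_iff_right (hJℓ ▸ ENNReal.ofReal_ne_top : μH[1] J ≠ ⊤)).1 ?_
  calc μH[1] J + μH[1] J = 2 * μH[1] J := (two_mul _).symm
    _ ≤ 2 * μH[1] (I \ X) + 2 * μH[1] X := by
        rw [← mul_add]
        gcongr
    _ ≤ 2 * μH[1] (I \ X) + μH[1] J := by
        rw [hJℓ]
        gcongr

theorem ofReal_rpow_mul_measure_le (h : IsArcLengthParam Γ Λ L γ) {ν : Measure ℂ} {lam : ℝ}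
    (hν : IsAInftyMeasure Γ ν lam) {E : Set ℂ} (hE : MeasurableSet E) {a ℓ : ℝ} (hℓ : 0 ≤ ℓ)
    (hℓL : ℓ ≤ L) (hEℓ : μH[1] E ≤ ENNReal.ofReal (ℓ / 4)) {f : ℂ → ℝ} (hf : Continuous f)
    {x p T : ℝ} (hx : 0 ≤ x) (hp : 0 ≤ p)
    (hS : μH[1] {z ∈ γ '' Icc a (a + ℓ) | f z ≤ Real.exp (-T) * x} ≤ ENNReal.ofReal (ℓ / 4)) :
    ENNReal.ofReal (x ^ p) * ν (γ '' Icc a (a + ℓ)) ≤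
      ENNReal.ofReal (lam * Real.exp (p * T)) *
        ∫⁻ z in γ '' Ico a (a + ℓ) \ E, ENNReal.ofReal (f z ^ p) ∂ν := by
  set I := γ '' Ico a (a + ℓ)
  set S := {z ∈ γ '' Icc a (a + ℓ) | f z ≤ Real.exp (-T) * x}
  have hSm : MeasurableSet S := ((h.isCompact_image _ _).inter_right
    (isClosed_le hf continuous_const)).measurableSet
  have hIm : MeasurableSet I := h.measurableSet_image_Ico (by linarith)
  have hES : 2 * μH[1] (E ∪ S) ≤ ENNReal.ofReal ℓ := by
    calc 2 * μH[1] (E ∪ S)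
        ≤ ENNReal.ofReal 2 * (ENNReal.ofReal (ℓ / 4) + ENNReal.ofReal (ℓ / 4)) := by
          rw [ENNReal.ofReal_ofNat]
          gcongr
          exact (measure_union_le _ _).trans (add_le_add hEℓ hS)
      _ = ENNReal.ofReal ℓ := by
          rw [← ENNReal.ofReal_add (by positivity) (by positivity),
            ← ENNReal.ofReal_mul zero_le_two]
          ring_nf
  have hlarge : ∀ z ∈ I \ (E ∪ S), Real.exp (-T) * x ≤ f z := fun z hz => by
    by_contra! hlt
    exact hz.2 (Or.inr ⟨image_mono Ico_subset_Icc_self hz.1, hlt.le⟩)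
  calc ENNReal.ofReal (x ^ p) * ν (γ '' Icc a (a + ℓ))
      ≤ ENNReal.ofReal (x ^ p) * (ENNReal.ofReal lam * ν (I \ (E ∪ S))) := by
        gcongr
        exact h.measure_image_Icc_le_diff hν hℓ hℓL (hE.union hSm) hES
    _ = ENNReal.ofReal lam * (ENNReal.ofReal (x ^ p) * ν (I \ (E ∪ S))) := mul_left_comm _ _ _
    _ ≤ ENNReal.ofReal lam * (ENNReal.ofReal (Real.exp (p * T)) *
          ∫⁻ z in I \ (E ∪ S), ENNReal.ofReal (f z ^ p) ∂ν) := by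
        refine mul_le_mul_right ?_ _
        exact setLIntegral_const_rpow_le ν hx hp (hIm.diff (hE.union hSm)) hlarge
    _ ≤ ENNReal.ofReal lam * (ENNReal.ofReal (Real.exp (p * T)) *
          ∫⁻ z in I \ E, ENNReal.ofReal (f z ^ p) ∂ν) := by
        gcongr
        exact subset_union_left
    _ = _ := by
        rw [← mul_assoc, ENNReal.ofReal_mul (zero_le_one.trans hν.1)]

end IsArcLengthParam

/-! ### Summation over the arcs -/

theorem lintegral_rpow_neg_le_of_measure_ball_le {X : Type*} [PseudoMetricSpace X]
    [MeasurableSpace X] [OpensMeasurableSpace X] {ν : Measure X} {x : X} {r c α : ℝ} {V : ℝ≥0∞}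
    (hr : 0 < r) (hα : 0 ≤ α) (hcα : 2 * c ≤ 2 ^ α)
    (hball : ∀ i : ℕ, ν (ball x (2 ^ i * r)) ≤ ENNReal.ofReal c ^ i * V) :
    ∫⁻ z, ENNReal.ofReal ((1 + dist z x / r) ^ (-α)) ∂ν ≤ 2 * ENNReal.ofReal c * V := by
  set q := ENNReal.ofReal ((2 ^ α)⁻¹)
  have hqc : q * ENNReal.ofReal c ≤ 2⁻¹ := by
    rw [← ENNReal.ofReal_mul (by positivity), ← ENNReal.ofReal_ofNat,
      ← ENNReal.ofReal_inv_of_pos two_pos]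
    refine ENNReal.ofReal_le_ofReal ?_
    rw [inv_mul_le_iff₀ (by positivity)]
    linarith
  have hdyadic : ∀ z, ENNReal.ofReal ((1 + dist z x / r) ^ (-α)) ≤
      ∑' i : ℕ, (ball x (2 ^ (i + 1) * r)).indicator (fun _ => q ^ i) z := fun z => by
    have hd : 0 ≤ dist z x / r := by positivity
    obtain ⟨i, hi, hi'⟩ := exists_nat_pow_near (le_add_of_nonneg_right hd) one_lt_two
    refine le_trans ?_ (ENNReal.le_tsum i)
    have hz : z ∈ ball x (2 ^ (i + 1) * r) := mem_ball.2 ((div_lt_iff₀ hr).1 (by linarith))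
    rw [indicator_of_mem hz, ← ENNReal.ofReal_pow (by positivity)]
    refine ENNReal.ofReal_le_ofReal ?_
    rw [inv_pow, ← Real.rpow_natCast, ← Real.rpow_mul zero_le_two, mul_comm,
      Real.rpow_mul zero_le_two, Real.rpow_natCast, ← Real.rpow_neg (by positivity)]
    exact Real.rpow_le_rpow_of_nonpos (by positivity) hi (neg_nonpos.2 hα)
  calc ∫⁻ z, ENNReal.ofReal ((1 + dist z x / r) ^ (-α)) ∂ν
      ≤ ∫⁻ z, ∑' i : ℕ, (ball x (2 ^ (i + 1) * r)).indicator (fun _ => q ^ i) z ∂ν :=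
        lintegral_mono hdyadic
    _ = ∑' i : ℕ, q ^ i * ν (ball x (2 ^ (i + 1) * r)) := by
        rw [lintegral_tsum fun i => (measurable_const.indicator measurableSet_ball).aemeasurable]
        simp only [lintegral_indicator_const measurableSet_ball]
    _ ≤ ∑' i : ℕ, ENNReal.ofReal c * V * (2⁻¹ : ℝ≥0∞) ^ i := by
        refine ENNReal.tsum_le_tsum fun i => ?_
        calc q ^ i * ν (ball x (2 ^ (i + 1) * r))
            ≤ q ^ i * (ENNReal.ofReal c ^ (i + 1) * V) := mul_le_mul_right (hball (i + 1)) _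
          _ = ENNReal.ofReal c * V * (q * ENNReal.ofReal c) ^ i := by ring
          _ ≤ ENNReal.ofReal c * V * (2⁻¹ : ℝ≥0∞) ^ i := by gcongr
    _ = 2 * ENNReal.ofReal c * V := by
        rw [ENNReal.tsum_mul_left, ENNReal.tsum_geometric, ENNReal.one_sub_inv_two, inv_inv]
        ring

theorem exists_isGrowthPoint {Γ : Set ℂ} (hΓ : IsCompact Γ) {f : ℂ → ℝ} (hf : ContinuousOn f Γ)
    (hf0 : ∀ z ∈ Γ, 0 ≤ f z) {ℓ A : ℝ} (hℓ : 0 < ℓ) (hA : 0 ≤ A) {z : ℂ} (hz : z ∈ Γ) :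
    ∃ ζ ∈ Γ, IsGrowthPoint Γ f ℓ A ζ ∧ f z * (1 + dist z ζ / ℓ) ^ A ≤ f ζ := by
  set D : ℂ → ℂ → ℝ := fun x y => 1 + dist x y / ℓ
  have hD : ∀ x y, 0 < D x y := fun x y => by positivity
  have hDmul : ∀ ξ ζ, D z ξ ≤ D ξ ζ * D z ζ := fun ξ ζ => by
    have hadd : dist z ξ / ℓ ≤ dist ξ ζ / ℓ + dist z ζ / ℓ := by
      rw [← add_div, add_comm (dist ξ ζ)]
      gcongr
      exact dist_triangle_right z ξ ζ
    have hmul : 0 ≤ dist ξ ζ / ℓ * (dist z ζ / ℓ) := by positivity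
    linarith [show D ξ ζ * D z ζ = 1 + dist ξ ζ / ℓ + dist z ζ / ℓ +
      dist ξ ζ / ℓ * (dist z ζ / ℓ) by ring]
  obtain ⟨ζ, hζ, hmax⟩ := hΓ.exists_isMaxOn ⟨z, hz⟩ (f := fun ζ => f ζ / D z ζ ^ A)
    (hf.div (by fun_prop (disch := positivity)) fun ζ _ => (Real.rpow_pos_of_pos (hD z ζ) A).ne')
  have hle : ∀ ξ ∈ Γ, f ξ * D z ζ ^ A ≤ f ζ * D z ξ ^ A := fun ξ hξ =>
    (div_le_div_iff₀ (Real.rpow_pos_of_pos (hD z ξ) A) (Real.rpow_pos_of_pos (hD z ζ) A)).1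
      (hmax hξ)
  refine ⟨ζ, hζ, fun ξ hξ => le_of_mul_le_mul_right ?_ (Real.rpow_pos_of_pos (hD z ζ) A), ?_⟩
  · calc f ξ * D z ζ ^ A ≤ f ζ * D z ξ ^ A := hle ξ hξ
      _ ≤ f ζ * (D ξ ζ * D z ζ) ^ A := by
          have := hf0 ζ hζ
          gcongr
          exact hDmul ξ ζ
      _ = f ζ * D ξ ζ ^ A * D z ζ ^ A := by
          rw [Real.mul_rpow (hD ξ ζ).le (hD z ζ).le, mul_assoc]
  · simpa [D] using hle z hz

theorem rpow_le_mul_rpow_neg_of_mul_rpow_le {x y y' d d' A p : ℝ} (hp : 0 ≤ p) (hA : 0 ≤ A)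
    (hx : 0 ≤ x) (hy' : 0 ≤ y') (hd : 0 ≤ d) (hd' : 0 ≤ d') (hdd : d' ≤ d + 1)
    (hxy : x * (1 + d) ^ A ≤ y) (hyy : y ≤ y' * 2 ^ A) :
    x ^ p ≤ 4 ^ (A * p) * y' ^ p * (1 + d') ^ (-(A * p)) := by
  have hD' : 0 < 1 + d' := by positivity
  have hxle : x ≤ 4 ^ A * y' * (1 + d') ^ (-A) := by
    rw [Real.rpow_neg hD'.le, ← div_eq_mul_inv, le_div_iff₀ (by positivity)]
    calc x * (1 + d') ^ A ≤ x * (2 * (1 + d)) ^ A := by gcongr; linarith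
      _ = 2 ^ A * (x * (1 + d) ^ A) := by
          rw [Real.mul_rpow zero_le_two (by positivity)]
          ring
      _ ≤ 2 ^ A * (y' * 2 ^ A) := mul_le_mul_of_nonneg_left (hxy.trans hyy) (by positivity)
      _ = 4 ^ A * y' := by
          rw [show (4 : ℝ) = 2 * 2 by norm_num, Real.mul_rpow zero_le_two zero_le_two]
          ring
  calc x ^ p ≤ (4 ^ A * y' * (1 + d') ^ (-A)) ^ p := by gcongr
    _ = 4 ^ (A * p) * y' ^ p * (1 + d') ^ (-(A * p)) := by
        rw [Real.mul_rpow (by positivity) (by positivity), Real.mul_rpow (by positivity) hy',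
          ← Real.rpow_mul (by positivity), ← Real.rpow_mul hD'.le, neg_mul]

namespace IsArcLengthParam

variable {Γ : Set ℂ} {Λ L : ℝ} {γ : ℝ → ℂ}

theorem measure_inter_ball_le (h : IsArcLengthParam Γ Λ L γ) (hΛ : 0 ≤ Λ) {ν : Measure ℂ}
    {lam : ℝ} (hν : IsAInftyMeasure Γ ν lam) {m : ℕ} (hm : 2 * Λ + 1 ≤ 2 ^ m) {a ℓ : ℝ}
    (hℓ : 0 ≤ ℓ) {ζ₀ : ℂ} (hζ₀ : ζ₀ ∈ γ '' Icc a (a + ℓ)) (i : ℕ) :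
    ν (Γ ∩ ball ζ₀ (2 ^ i * ℓ)) ≤
      ENNReal.ofReal lam ^ i * (ENNReal.ofReal lam ^ m * ν (γ '' Icc a (a + ℓ))) := by
  obtain ⟨t, ht, rfl⟩ := hζ₀
  have hdouble := h.measure_image_two_pow_mul_le hν (a + ℓ / 2) (r := ℓ / 2) (by positivity)
    (i + m)
  rw [pow_add (ENNReal.ofReal lam), mul_assoc, show a + ℓ / 2 - ℓ / 2 = a by ring,
    show a + ℓ / 2 + ℓ / 2 = a + ℓ by ring] at hdouble
  refine (measure_mono ?_).trans hdouble
  rintro ξ ⟨hξ, hξd⟩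
  have hmem := h.mem_image_of_dist_le hΛ hξ (t := t) (r := 2 ^ i * ℓ)
    (by rw [dist_comm]; exact (mem_ball.1 hξd).le)
  have hradius : Λ * (2 ^ i * ℓ) + ℓ / 2 ≤ 2 ^ (i + m) * (ℓ / 2) := by
    have hℓi : ℓ ≤ 2 ^ i * ℓ := le_mul_of_one_le_left hℓ (one_le_pow₀ one_le_two)
    calc Λ * (2 ^ i * ℓ) + ℓ / 2 ≤ 2 ^ i * (ℓ / 2) * (2 * Λ + 1) := by linarith
      _ ≤ 2 ^ i * (ℓ / 2) * 2 ^ m := by gcongr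
      _ = 2 ^ (i + m) * (ℓ / 2) := by ring
  exact image_mono (Icc_subset_Icc (by linarith [ht.1, ht.2]) (by linarith [ht.1, ht.2])) hmem

theorem setLIntegral_rpow_neg_le (h : IsArcLengthParam Γ Λ L γ) (hΛ : 0 ≤ Λ) {ν : Measure ℂ}
    {lam : ℝ} (hν : IsAInftyMeasure Γ ν lam) {α : ℝ} (hα0 : 0 ≤ α) (hα : 2 * lam ≤ 2 ^ α)
    {m : ℕ} (hm : 2 * Λ + 1 ≤ 2 ^ m) {a ℓ : ℝ} (hℓ : 0 < ℓ) {ζ₀ : ℂ}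
    (hζ₀ : ζ₀ ∈ γ '' Icc a (a + ℓ)) :
    ∫⁻ z in Γ, ENNReal.ofReal ((1 + dist z ζ₀ / ℓ) ^ (-α)) ∂ν ≤
      ENNReal.ofReal (2 * lam ^ (m + 1)) * ν (γ '' Icc a (a + ℓ)) := by
  have hlam : 0 ≤ lam := zero_le_one.trans hν.1
  refine (lintegral_rpow_neg_le_of_measure_ball_le hℓ hα0 hα
    (V := ENNReal.ofReal lam ^ m * ν (γ '' Icc a (a + ℓ))) fun i => ?_).trans_eq ?_
  · rw [Measure.restrict_apply measurableSet_ball, inter_comm]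
    exact h.measure_inter_ball_le hΛ hν hm hℓ.le hζ₀ i
  · rw [ENNReal.ofReal_mul zero_le_two, ENNReal.ofReal_pow hlam, ENNReal.ofReal_ofNat]
    ring

theorem exists_mem_image_Ico_mul (h : IsArcLengthParam Γ Λ L γ) {k : ℕ} {ℓ : ℝ} (hℓ : 0 < ℓ)
    (hk : k * ℓ = L) {ζ : ℂ} (hζ : ζ ∈ Γ) : ∃ j < k, ζ ∈ γ '' Ico (j * ℓ) (j * ℓ + ℓ) := by
  obtain ⟨v, ⟨hv0, hvL⟩, rfl⟩ := h.exists_mem_Ico 0 hζ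
  rw [zero_add, ← hk] at hvL
  have hfloor := (le_div_iff₀ hℓ).1 (Nat.floor_le (div_nonneg hv0 hℓ.le))
  have hfloor' := (div_lt_iff₀ hℓ).1 (Nat.lt_floor_add_one (v / ℓ))
  exact ⟨⌊v / ℓ⌋₊, (Nat.floor_lt (by positivity)).2 ((div_lt_iff₀ hℓ).2 hvL), v,
    ⟨hfloor, by linarith⟩, rfl⟩

theorem disjoint_image_Ico_mul (h : IsArcLengthParam Γ Λ L γ) {k : ℕ} {ℓ : ℝ} (hℓ : 0 ≤ ℓ)
    (hk : k * ℓ = L) {i j : ℕ} (hi : i < k) (hj : j < k) (hij : i ≠ j) :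
    Disjoint (γ '' Ico (i * ℓ) (i * ℓ + ℓ)) (γ '' Ico (j * ℓ) (j * ℓ + ℓ)) := by
  have hsucc : ∀ {i j : ℕ}, i < j → (i : ℝ) * ℓ + ℓ ≤ j * ℓ := fun {i j} hij => by
    rw [← add_one_mul]
    gcongr
    exact_mod_cast hij
  have hsub : ∀ i < k, Ico ((i : ℝ) * ℓ) (i * ℓ + ℓ) ⊆ Ico 0 (0 + L) := fun i hi =>
    Ico_subset_Ico (by positivity) (by rw [zero_add, ← hk]; exact hsucc hi)
  refine disjoint_image_image fun x hx y hy hxy => ?_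
  obtain rfl := h.injOn 0 (hsub i hi hx) (hsub j hj hy) hxy
  rcases hij.lt_or_gt with hlt | hlt
  · linarith [hx.2, hy.1, hsucc hlt]
  · linarith [hx.1, hy.2, hsucc hlt]

theorem sum_setLIntegral_image_Ico_diff_le (h : IsArcLengthParam Γ Λ L γ) {k : ℕ} {ℓ : ℝ}
    (hℓ : 0 ≤ ℓ) (hk : k * ℓ = L) (ν : Measure ℂ) {E : Set ℂ} (hE : MeasurableSet E)
    (g : ℂ → ℝ≥0∞) {G : Finset ℕ} (hG : ∀ j ∈ G, j < k) :
    ∑ j ∈ G, ∫⁻ z in γ '' Ico (j * ℓ) (j * ℓ + ℓ) \ E, g z ∂ν ≤ ∫⁻ z in Γ \ E, g z ∂ν := by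
  have hmeas : ∀ j ∈ G, MeasurableSet (γ '' Ico (j * ℓ) (j * ℓ + ℓ) \ E) := fun j hj => by
    refine (h.measurableSet_image_Ico ?_).diff hE
    rw [← hk]
    gcongr
    exact le_mul_of_one_le_left hℓ (by exact_mod_cast (Nat.zero_le j).trans_lt (hG j hj))
  rw [← lintegral_biUnion_finset (fun i hi j hj hij =>
    (h.disjoint_image_Ico_mul hℓ hk (hG i hi) (hG j hj) hij).mono sdiff_subset sdiff_subset)
    hmeas]
  refine lintegral_mono_set (iUnion₂_subset fun j _ => sdiff_subset_sdiff_left ?_)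
  rintro _ ⟨t, -, rfl⟩
  exact h.mem t

theorem exists_isGrowthPoint_family (h : IsArcLengthParam Γ Λ L γ) {k : ℕ} {ℓ : ℝ} (hℓ : 0 < ℓ)
    (hk : k * ℓ = L) {f : ℂ → ℝ} (hf : ContinuousOn f Γ) (hf0 : ∀ z ∈ Γ, 0 ≤ f z) {A p : ℝ}
    (hA : 0 ≤ A) (hp : 0 ≤ p) :
    ∃ (G : Finset ℕ) (ζ : ℕ → ℂ),
      (∀ j ∈ G, j < k ∧ ζ j ∈ γ '' Ico (j * ℓ) (j * ℓ + ℓ) ∧ IsGrowthPoint Γ f ℓ A (ζ j)) ∧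
      ∀ z ∈ Γ, ∃ j ∈ G,
        f z ^ p ≤ 4 ^ (A * p) * f (ζ j) ^ p * (1 + dist z (ζ j) / ℓ) ^ (-(A * p)) := by
  classical
  set G : Finset ℕ := (Finset.range k).filter fun j : ℕ =>
    ∃ ζ ∈ γ '' Ico (j * ℓ) (j * ℓ + ℓ), IsGrowthPoint Γ f ℓ A ζ
  have hex : ∀ j ∈ G, ∃ ζ, ζ ∈ γ '' Ico (j * ℓ) (j * ℓ + ℓ) ∧ IsGrowthPoint Γ f ℓ A ζ :=
    fun j hj => (Finset.mem_filter.1 hj).2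
  choose! ζ hζ using hex
  refine ⟨G, ζ, fun j hj => ⟨Finset.mem_range.1 (Finset.mem_filter.1 hj).1, hζ j hj⟩,
    fun z hz => ?_⟩
  obtain ⟨η, hη, hηgrowth, hzη⟩ := exists_isGrowthPoint h.isCompact hf hf0 hℓ hA hz
  obtain ⟨j, hj, hηj⟩ := h.exists_mem_image_Ico_mul hℓ hk hη
  have hjG : j ∈ G := Finset.mem_filter.2 ⟨Finset.mem_range.2 hj, η, hηj, hηgrowth⟩
  obtain ⟨hζj, hζgrowth⟩ := hζ j hjG
  have hζΓ : ζ j ∈ Γ := by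
    obtain ⟨t, -, ht⟩ := hζj
    exact ht ▸ h.mem t
  have hηζ : dist η (ζ j) / ℓ ≤ 1 := (div_le_one hℓ).2 (by
    simpa using h.dist_le_of_mem_image (by linarith)
      (image_mono Ico_subset_Icc_self hηj) (image_mono Ico_subset_Icc_self hζj))
  have hzζ : dist z (ζ j) / ℓ ≤ dist z η / ℓ + 1 := by
    refine le_trans ?_ (add_le_add_right hηζ _)
    rw [← add_div]
    gcongr
    exact dist_triangle z η (ζ j)
  have hηle : f η ≤ f (ζ j) * 2 ^ A := by
    refine (hζgrowth η hη).trans ?_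
    have := hf0 _ hζΓ
    gcongr
    linarith
  exact ⟨j, hjG, rpow_le_mul_rpow_neg_of_mul_rpow_le hp hA (hf0 z hz) (hf0 _ hζΓ) (by positivity)
    (by positivity) hzζ hzη hηle⟩

theorem setLIntegral_rpow_le_of_isGrowthPoint (h : IsArcLengthParam Γ Λ L γ) (hΛ : 0 ≤ Λ)
    {ν : Measure ℂ} {lam : ℝ} (hν : IsAInftyMeasure Γ ν lam) {A p : ℝ} (hA : 0 ≤ A) (hp : 0 ≤ p)
    (hlam : 2 * lam ≤ 2 ^ (A * p)) {m : ℕ} (hm : 2 * Λ + 1 ≤ 2 ^ m) {k : ℕ} {ℓ : ℝ}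
    (hℓ : 0 < ℓ) (hk : k * ℓ = L) {E : Set ℂ} (hE : MeasurableSet E) {f : ℂ → ℝ}
    (hf : ContinuousOn f Γ) (hf0 : ∀ z ∈ Γ, 0 ≤ f z) {K : ℝ≥0∞}
    (hK : ∀ (a : ℝ) (ζ : ℂ), ζ ∈ γ '' Icc a (a + ℓ) → IsGrowthPoint Γ f ℓ A ζ →
      ENNReal.ofReal (f ζ ^ p) * ν (γ '' Icc a (a + ℓ)) ≤
        K * ∫⁻ z in γ '' Ico a (a + ℓ) \ E, ENNReal.ofReal (f z ^ p) ∂ν) :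
    ∫⁻ z in Γ, ENNReal.ofReal (f z ^ p) ∂ν ≤
      ENNReal.ofReal (4 ^ (A * p) * (2 * lam ^ (m + 1))) * K *
        ∫⁻ z in Γ \ E, ENNReal.ofReal (f z ^ p) ∂ν := by
  obtain ⟨G, ζ, hζ, hdom⟩ := h.exists_isGrowthPoint_family hℓ hk hf hf0 hA hp
  set B := ENNReal.ofReal (4 ^ (A * p))
  set D := ENNReal.ofReal (2 * lam ^ (m + 1))
  set Y : ℕ → ℝ≥0∞ := fun j => ENNReal.ofReal (f (ζ j) ^ p)
  set w : ℕ → ℂ → ℝ≥0∞ := fun j z => ENNReal.ofReal ((1 + dist z (ζ j) / ℓ) ^ (-(A * p)))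
  have hw : ∀ j, Measurable (w j) := fun j => by fun_prop
  have hsum : ∀ z ∈ Γ, ENNReal.ofReal (f z ^ p) ≤ ∑ j ∈ G, B * Y j * w j z := fun z hz => by
    obtain ⟨j, hj, hle⟩ := hdom z hz
    refine le_trans ?_ (Finset.single_le_sum (f := fun j => B * Y j * w j z)
      (fun _ _ => zero_le) hj)
    refine (ENNReal.ofReal_le_ofReal hle).trans_eq ?_
    rw [ENNReal.ofReal_mul' (by positivity), ENNReal.ofReal_mul (by positivity)]
  have hterm : ∀ j ∈ G, ∫⁻ z in Γ, B * Y j * w j z ∂ν ≤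
      B * D * K * ∫⁻ z in γ '' Ico (j * ℓ) (j * ℓ + ℓ) \ E, ENNReal.ofReal (f z ^ p) ∂ν :=
    fun j hj => by
    obtain ⟨-, hζj, hgrowth⟩ := hζ j hj
    have hζJ : ζ j ∈ γ '' Icc (j * ℓ) (j * ℓ + ℓ) := image_mono Ico_subset_Icc_self hζj
    calc ∫⁻ z in Γ, B * Y j * w j z ∂ν = B * Y j * ∫⁻ z in Γ, w j z ∂ν :=
          lintegral_const_mul _ (hw j)
      _ ≤ B * Y j * (D * ν (γ '' Icc (j * ℓ) (j * ℓ + ℓ))) :=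
          mul_le_mul_right (h.setLIntegral_rpow_neg_le hΛ hν (by positivity) hlam hm hℓ hζJ) _
      _ = B * D * (Y j * ν (γ '' Icc (j * ℓ) (j * ℓ + ℓ))) := by ring
      _ ≤ B * D * (K * _) := mul_le_mul_right (hK _ _ hζJ hgrowth) _
      _ = _ := by ring
  calc ∫⁻ z in Γ, ENNReal.ofReal (f z ^ p) ∂ν
      ≤ ∫⁻ z in Γ, ∑ j ∈ G, B * Y j * w j z ∂ν :=
        setLIntegral_mono' h.isCompact.measurableSet hsum
    _ = ∑ j ∈ G, ∫⁻ z in Γ, B * Y j * w j z ∂ν :=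
        lintegral_finsetSum _ fun j _ => (hw j).const_mul _
    _ ≤ B * D * K * ∑ j ∈ G,
          ∫⁻ z in γ '' Ico (j * ℓ) (j * ℓ + ℓ) \ E, ENNReal.ofReal (f z ^ p) ∂ν :=
        (Finset.sum_le_sum hterm).trans_eq (Finset.mul_sum _ _ _).symm
    _ ≤ B * D * K * ∫⁻ z in Γ \ E, ENNReal.ofReal (f z ^ p) ∂ν :=
        mul_le_mul_right (h.sum_setLIntegral_image_Ico_diff_le hℓ.le hk ν hE _
          fun j hj => (hζ j hj).1) _
    _ = _ := by rw [ENNReal.ofReal_mul (by positivity)]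

end IsArcLengthParam

theorem le_dist_of_le_setDist {A B : Set ℂ} {s : ℝ} (hs : s ≤ setDist A B) {a b : ℂ}
    (ha : a ∈ A) (hb : b ∈ B) : s ≤ dist a b := by
  refine hs.trans (csInf_le ⟨0, ?_⟩ (mem_image2_of_mem ha hb))
  rintro _ ⟨x, -, y, -, rfl⟩
  exact dist_nonneg

theorem exists_nat_mul_eq_of_le {r L : ℝ} (hr : 0 < r) (hrL : r ≤ L) :
    ∃ (k : ℕ) (ℓ : ℝ), k * ℓ = L ∧ r ≤ ℓ ∧ ℓ ≤ 2 * r ∧ ℓ ≤ L := by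
  have hquot : 1 ≤ L / r := (one_le_div hr).2 hrL
  set k := ⌊L / r⌋₊
  have hk : (1 : ℝ) ≤ k := by exact_mod_cast Nat.one_le_floor_iff _ |>.2 hquot
  have hk0 : (0 : ℝ) < k := zero_lt_one.trans_le hk
  have hfloor : k * r ≤ L := (le_div_iff₀ hr).1 (Nat.floor_le (zero_le_one.trans hquot))
  have hfloor' : L < (k + 1) * r := (div_lt_iff₀ hr).1 (Nat.lt_floor_add_one (L / r))
  refine ⟨k, L / k, mul_div_cancel₀ _ hk0.ne', (le_div_iff₀ hk0).2 (by linarith),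
    (div_le_iff₀ hk0).2 ?_, div_le_self (hr.le.trans hrL) hk⟩
  calc L ≤ (k + 1) * r := hfloor'.le
    _ ≤ (k + k) * r := by gcongr
    _ = 2 * r * k := by ring

namespace IsArcLengthParam

variable {Γ : Set ℂ} {Λ L : ℝ} {γ : ℝ → ℂ}

theorem ofReal_norm_eval_rpow_mul_measure_le (h : IsArcLengthParam Γ Λ L γ) (hΛ : 0 ≤ Λ)
    {Φ : ℂ → ℂ} (hΦ : IsExtConformal (unboundedComponent Γ) Φ) {s δ : ℝ} (hs : 0 < s)
    (hδ : 0 < δ) (hsΓ : ∀ ζ ∈ Γ, ∀ y ∈ levelCurve (unboundedComponent Γ) Φ δ, s ≤ dist y ζ)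
    {n : ℕ} {P : Polynomial ℂ} (hP : P.natDegree ≤ n) {a ℓ : ℝ} (hℓ : 0 < ℓ) (hℓs : ℓ ≤ 8 * s)
    (hℓL : ℓ ≤ L) {ν : Measure ℂ} {lam : ℝ} (hν : IsAInftyMeasure Γ ν lam) {A p : ℝ}
    (hA : 0 < A) (hp : 0 < p) {E : Set ℂ} (hE : MeasurableSet E)
    (hEℓ : μH[1] E ≤ ENNReal.ofReal (ℓ / 4)) {ζ : ℂ} (hζ : ζ ∈ γ '' Icc a (a + ℓ))
    (hgrowth : IsGrowthPoint Γ (fun z => ‖P.eval z‖) ℓ A ζ) :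
    ENNReal.ofReal (‖P.eval ζ‖ ^ p) * ν (γ '' Icc a (a + ℓ)) ≤
      ENNReal.ofReal (lam * Real.exp
        (p * (64 * Λ * (A * (4 + Real.log 3 + 8 * Λ) + 128 * δ * n + 1) + 1))) *
        ∫⁻ z in γ '' Ico a (a + ℓ) \ E, ENNReal.ofReal (‖P.eval z‖ ^ p) ∂ν := by
  by_cases hPζ : P.eval ζ = 0
  · simp [hPζ, Real.zero_rpow hp.ne']
  · have : 0 < Real.log 3 := Real.log_pos (by norm_num)
    exact h.ofReal_rpow_mul_measure_le hν hE hℓ.le hℓL hEℓ P.continuous.norm (norm_nonneg _) hp.le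
      (h.hausdorffMeasure_sep_le hΛ P.differentiable hℓ hζ hPζ (by positivity) fun z hz =>
        h.norm_eval_le_exp_mul hΛ hΦ hs hδ hsΓ hP hℓ hℓs hℓL hA hζ hgrowth hz)

theorem setLIntegral_norm_eval_rpow_le (h : IsArcLengthParam Γ Λ L γ) (hΛ : 0 ≤ Λ) {Φ : ℂ → ℂ}
    (hΦ : IsExtConformal (unboundedComponent Γ) Φ) {s δ : ℝ} (hs : 0 < s) (hsL : 4 * s ≤ L)
    (hδ : 0 < δ) (hsδ : s ≤ setDist Γ (levelCurve (unboundedComponent Γ) Φ δ)) {n : ℕ}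
    {P : Polynomial ℂ} (hP : P.natDegree ≤ n) {ν : Measure ℂ} {lam : ℝ}
    (hν : IsAInftyMeasure Γ ν lam) {A p : ℝ} (hA : 0 < A) (hp : 0 < p)
    (hlam : 2 * lam ≤ 2 ^ (A * p)) {m : ℕ} (hm : 2 * Λ + 1 ≤ 2 ^ m) {E : Set ℂ}
    (hE : MeasurableSet E) (hEs : μH[1] E ≤ ENNReal.ofReal s) :
    ∫⁻ z in Γ, ENNReal.ofReal (‖P.eval z‖ ^ p) ∂ν ≤
      ENNReal.ofReal (4 ^ (A * p) * (2 * lam ^ (m + 1))) *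
        ENNReal.ofReal (lam * Real.exp
          (p * (64 * Λ * (A * (4 + Real.log 3 + 8 * Λ) + 128 * δ * n + 1) + 1))) *
        ∫⁻ z in Γ \ E, ENNReal.ofReal (‖P.eval z‖ ^ p) ∂ν := by
  obtain ⟨k, ℓ, hk, hsℓ, hℓs, hℓL⟩ := exists_nat_mul_eq_of_le (by positivity) hsL
  have hℓ : 0 < ℓ := by linarith
  have hEℓ : μH[1] E ≤ ENNReal.ofReal (ℓ / 4) :=
    hEs.trans (ENNReal.ofReal_le_ofReal (by linarith))
  exact h.setLIntegral_rpow_le_of_isGrowthPoint hΛ hν hA.le hp.le hlam hm hℓ hk hE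
    P.continuous.norm.continuousOn (fun _ _ => norm_nonneg _) fun a ζ hζ hgrowth =>
      h.ofReal_norm_eval_rpow_mul_measure_le hΛ hΦ hs hδ
        (fun ζ hζ y hy => dist_comm ζ y ▸ le_dist_of_le_setDist hsδ hζ hy) hP hℓ (by linarith)
        hℓL hν hA hp hE hEℓ hζ hgrowth

end IsArcLengthParam

theorem setIntegral_le_mul_of_setLIntegral_le {X : Type*} [MeasurableSpace X] {ν : Measure X}
    {s t : Set X} (hts : t ⊆ s) {f : X → ℝ} (hf : IntegrableOn f s ν) (hf0 : ∀ x, 0 ≤ f x)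
    {C : ℝ} (hC : 0 ≤ C)
    (h : ∫⁻ x in s, ENNReal.ofReal (f x) ∂ν ≤
      ENNReal.ofReal C * ∫⁻ x in t, ENNReal.ofReal (f x) ∂ν) :
    ∫ x in s, f x ∂ν ≤ C * ∫ x in t, f x ∂ν := by
  rw [← ofReal_integral_eq_lintegral_ofReal hf (Eventually.of_forall hf0),
    ← ofReal_integral_eq_lintegral_ofReal (hf.mono_set hts) (Eventually.of_forall hf0),
    ← ENNReal.ofReal_mul hC] at h
  exact (ENNReal.ofReal_le_ofReal_iff (mul_nonneg hC (integral_nonneg hf0))).1 h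

theorem weighted_remez_inequality_general (Λ lam : ℝ) {p : ℝ} (hp : 0 < p) :
    ∃ c₁ > (0 : ℝ), ∃ c₂ > (0 : ℝ), ∀ (Γ : Set ℂ) (Φ : ℂ → ℂ), IsJordanCurve Γ →
      IsQuasismooth Γ Λ → IsExtConformal (unboundedComponent Γ) Φ →
      ∀ (ν : Measure ℂ) [IsFiniteMeasure ν], IsAInftyMeasure Γ ν lam →
      ∀ (n : ℕ) (P : Polynomial ℂ) (E : Set ℂ) (s δ : ℝ), P.natDegree ≤ n → MeasurableSet E →
        0 < s → μH[1] E ≤ ENNReal.ofReal s → s ≤ diam Γ / 4 → 0 < δ →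
        s ≤ setDist Γ (levelCurve (unboundedComponent Γ) Φ δ) →
        ∫ z in Γ, ‖P.eval z‖ ^ p ∂ν ≤
          c₁ * Real.exp (c₂ * δ * n) * ∫ z in Γ \ E, ‖P.eval z‖ ^ p ∂ν := by
  by_cases hconst : 1 ≤ Λ ∧ 1 ≤ lam
  swap
  · exact ⟨1, one_pos, 1, one_pos, fun _ _ _ hq _ _ _ hν => absurd ⟨hq.1, hν.1⟩ hconst⟩
  obtain ⟨hΛ, hlam⟩ := hconst
  obtain ⟨m, hm⟩ := pow_unbounded_of_one_lt (2 * Λ + 1) one_lt_two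
  obtain ⟨A, hA, hAp⟩ : ∃ A : ℝ, 0 < A ∧ 2 * lam ≤ 2 ^ (A * p) :=
    ⟨Real.logb 2 (2 * lam) / p, div_pos (Real.logb_pos one_lt_two (by linarith)) hp, by
      rw [div_mul_cancel₀ _ hp.ne', Real.rpow_logb two_pos (by norm_num) (by positivity)]⟩
  set b : ℝ := A * (4 + Real.log 3 + 8 * Λ)
  refine ⟨4 ^ (A * p) * (2 * lam ^ (m + 1)) * (lam * Real.exp (p * (64 * Λ * (b + 1) + 1))),
    by positivity, p * (64 * Λ * 128), by positivity, ?_⟩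
  intro Γ Φ hJ hq hΦ ν _ hν n P E s δ hP hE hs hEs hsd hδ hsδ
  obtain ⟨L, γ, h⟩ := hJ.exists_isArcLengthParam hq
  have hcont : Continuous fun z => ‖P.eval z‖ ^ p :=
    P.continuous.norm.rpow_const fun _ => Or.inr hp.le
  have hexp : Real.exp (p * (64 * Λ * (b + 1) + 1)) * Real.exp (p * (64 * Λ * 128) * δ * n) =
      Real.exp (p * (64 * Λ * (b + 128 * δ * n + 1) + 1)) := by
    rw [← Real.exp_add]
    ring_nf
  refine setIntegral_le_mul_of_setLIntegral_le sdiff_subset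
    (hcont.continuousOn.integrableOn_compact h.isCompact) (fun z => by positivity)
    (by positivity) ?_
  rw [mul_assoc, mul_assoc lam, hexp, ENNReal.ofReal_mul (by positivity)]
  exact h.setLIntegral_norm_eval_rpow_le (by positivity) hΦ hs (by linarith [h.diam_le]) hδ hsδ hP
    hν hA hp hAp hm.le hE hEs

/-- weighted Remez-type inequality, Theorem 1:
for a quasismooth Jordan curve `Γ`, `ν ∈ A∞(Γ)` and `1 ≤ p < ∞`, there exist `c₁, c₂ > 0`
depending only on `Γ`, `λ_ν` and `p` such that for every `n`, every `p_n ∈ ℙ_n`, every Borel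
set `E ⊆ Γ` and every `s` with `0 < |E| ≤ s < (diam Γ)/12`,
`∫_Γ |p_n|^p dν ≤ c₁ exp(c₂ δ(s) n) ∫_{Γ∖E} |p_n|^p dν`. -/
theorem weighted_remez_inequality
    (Γ : Set ℂ) (Λ : ℝ) (hΓJ : IsJordanCurve Γ) (hΓq : IsQuasismooth Γ Λ)
    (lam : ℝ) (p : ℝ) (hp : 1 ≤ p)
    (Φ : ℂ → ℂ) (hΦ : IsExtConformal (unboundedComponent Γ) Φ) :
    ∃ c₁ > (0:ℝ), ∃ c₂ > (0:ℝ),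
      ∀ ν : MeasureTheory.Measure ℂ, IsFiniteMeasure ν →
        IsAInftyMeasure Γ ν lam → ν Γᶜ = 0 →
      ∀ (n : ℕ) (P : Polynomial ℂ) (E : Set ℂ) (s δs : ℝ),
        P.natDegree ≤ n → E ⊆ Γ → MeasurableSet E →
        0 < μH[1] E → μH[1] E ≤ ENNReal.ofReal s → s < Metric.diam Γ / 12 →
        0 < δs → setDist Γ (levelCurve (unboundedComponent Γ) Φ δs) = s →
        ∫ z in Γ, ‖P.eval z‖ ^ p ∂ν ≤
          c₁ * Real.exp (c₂ * δs * n) * ∫ z in Γ \ E, ‖P.eval z‖ ^ p ∂ν := by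
  obtain ⟨c₁, hc₁, c₂, hc₂, hremez⟩ :=
    weighted_remez_inequality_general Λ lam (zero_lt_one.trans_le hp)
  exact ⟨c₁, hc₁, c₂, hc₂, fun ν _ hν _ n P E s δ hP _ hE hE0 hEs hsd hδ hsδ =>
    hremez Γ Φ hΓJ hΓq hΦ ν hν n P E s δ hP hE (ENNReal.ofReal_pos.1 (hE0.trans_le hEs)) hEs
      (by linarith [diam_nonneg (s := Γ)]) hδ hsδ.ge⟩
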